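/- (i) The centraliser of Ỹ in 𝔄 equals ℍ^{gl_n}: {f ∈ 𝔄 : f·Ỹ = Ỹ·f} = ℍ^{gl_n}. (ii) The centraliser of ℍ^{gl_n} in 𝔄 equals the F-linear span of the powers of Ỹ: {f ∈ 𝔄 : f·g = g·f for all g ∈ ℍ^{gl_n}} = span_F{Ỹ^m : m ∈ ℤ}. -/

import Mathlib

set_option maxHeartbeats 1000000
set_option synthInstance.maxHeartbeats 1000000

noncomputable section

/-- The Laurent polynomial ring `R[X₁^{±1}, …, Xₙ^{±1}]` in `n` variables over `R`,
realised as the monoid algebra of the additive monoid `Fin n →₀ ℤ` of exponent vectors. -/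
abbrev Laur (R : Type*) [CommRing R] (n : ℕ) : Type _ :=
  AddMonoidAlgebra R (Fin n →₀ ℤ)

variable {R : Type*} [CommRing R] {n : ℕ}

/-- The monomial `c · X^a`. -/
def mono (a : Fin n →₀ ℤ) (c : R) : Laur R n := AddMonoidAlgebra.single a c

/-- The generator `X_i`. -/
def Xel (i : Fin n) : Laur R n := mono (Finsupp.single i 1) 1

/-- The element `X_i⁻¹`. -/
def XinvEl (i : Fin n) : Laur R n := mono (Finsupp.single i (-1)) 1

/-- Multiplication by a Laurent polynomial, as a linear endomorphism. -/
def mulOp (x : Laur R n) : Module.End R (Laur R n) := LinearMap.mulLeft R x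

/-- The operator of multiplication by `X_i`, with `ℕ`-indexing (`0`-based; junk value `1`
out of range). -/
def XOp (i : ℕ) : Module.End R (Laur R n) :=
  if h : i < n then mulOp (Xel ⟨i, h⟩) else 1

/-- The operator of multiplication by `X_i⁻¹`, with `ℕ`-indexing. -/
def XinvOp (i : ℕ) : Module.End R (Laur R n) :=
  if h : i < n then mulOp (XinvEl ⟨i, h⟩) else 1

/-- Ascending product `f s * f (s+1) * ⋯ * f (s+len-1)` (equal to `1` when `len = 0`). -/
def aF {M : Type*} [Monoid M] (f : ℕ → M) (s len : ℕ) : M :=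
  ((List.range' s len).map f).prod

/-- Descending product `f (s+len-1) * ⋯ * f (s+1) * f s` (equal to `1` when `len = 0`). -/
def dF {M : Type*} [Monoid M] (f : ℕ → M) (s len : ℕ) : M :=
  (((List.range' s len).map f).reverse).prod

/-- Integer power `u^z`, where `v` is a designated (two-sided) inverse of `u`. -/
def zpowOp {M : Type*} [Monoid M] (u v : M) (z : ℤ) : M :=
  if 0 ≤ z then u ^ z.toNat else v ^ (-z).toNat

/-- The generating set of the algebra `ℍ^{gl_n}`: the operators `T_k`, `Y_i^{±1}`, and
`e_{ij}` for `i ≠ j` (all `0`-based). -/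
def HglSet {R : Type*} [CommRing R] {n : ℕ} (T Y Yi : ℕ → Module.End R (Laur R n))
    (e : ℕ → ℕ → Module.End R (Laur R n)) : Set (Module.End R (Laur R n)) :=
  {f | (∃ k, k + 1 < n ∧ f = T k) ∨ (∃ i, i < n ∧ f = Y i) ∨ (∃ i, i < n ∧ f = Yi i)
      ∨ (∃ i j, i < n ∧ j < n ∧ i ≠ j ∧ f = e i j)}

/-- The generating set of the algebra `𝔄`: the operators `T_k`, `X_i`, `D_i`, `Y_i^{±1}`. -/
def AfrSet {R : Type*} [CommRing R] {n : ℕ} (T XO D Y Yi : ℕ → Module.End R (Laur R n)) :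
    Set (Module.End R (Laur R n)) :=
  {f | (∃ k, k + 1 < n ∧ f = T k) ∨
       (∃ i, i < n ∧ (f = XO i ∨ f = D i ∨ f = Y i ∨ f = Yi i))}


section MonoidLemmas
variable {M : Type*} [Monoid M]

lemma aF_zero (f : ℕ → M) (s : ℕ) : aF f s 0 = 1 := by simp [aF]
lemma dF_zero (f : ℕ → M) (s : ℕ) : dF f s 0 = 1 := by simp [dF]
lemma aF_succ (f : ℕ → M) (s l : ℕ) : aF f s (l + 1) = f s * aF f (s + 1) l := by
  simp [aF, List.range'_succ]
lemma dF_succ (f : ℕ → M) (s l : ℕ) : dF f s (l + 1) = dF f (s + 1) l * f s := by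
  simp [dF, List.range'_succ]
lemma aF_succ' (f : ℕ → M) (s l : ℕ) : aF f s (l + 1) = aF f s l * f (s + l) := by
  simp [aF, List.range'_concat]
lemma dF_succ' (f : ℕ → M) (s l : ℕ) : dF f s (l + 1) = f (s + l) * dF f s l := by
  simp [dF, List.range'_concat]

lemma aF_comm (f : ℕ → M) (x : M) (l : ℕ) : ∀ s, (∀ k, s ≤ k → k < s + l → x * f k = f k * x) →
    x * aF f s l = aF f s l * x := by
  induction l with
  | zero => intro s _; simp [aF_zero]
  | succ l ih =>
    intro s h
    rw [aF_succ, ← mul_assoc, h s le_rfl (by omega), mul_assoc,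
      ih (s + 1) (fun k h1 h2 => h k (by omega) (by omega)), mul_assoc]

lemma dF_comm (f : ℕ → M) (x : M) (l : ℕ) : ∀ s, (∀ k, s ≤ k → k < s + l → x * f k = f k * x) →
    x * dF f s l = dF f s l * x := by
  induction l with
  | zero => intro s _; simp [dF_zero]
  | succ l ih =>
    intro s h
    rw [dF_succ, ← mul_assoc, ih (s + 1) (fun k h1 h2 => h k (by omega) (by omega)), mul_assoc,
      h s le_rfl (by omega), mul_assoc]

lemma aF_dF_inv (f g : ℕ → M) (l : ℕ) : ∀ s, (∀ k, s ≤ k → k < s + l → f k * g k = 1) →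
    aF f s l * dF g s l = 1 := by
  induction l with
  | zero => intro s _; simp [aF_zero, dF_zero]
  | succ l ih =>
    intro s h
    have h1 := ih s (fun k h1 h2 => h k h1 (by omega))
    have h2 := ih (s + 1) (fun k h1 h2 => h k (by omega) (by omega))
    rw [aF_succ, dF_succ, mul_assoc, ← mul_assoc (aF f (s + 1) l), h2, one_mul]
    exact h s le_rfl (by omega)

lemma dF_aF_inv (f g : ℕ → M) (l : ℕ) : ∀ s, (∀ k, s ≤ k → k < s + l → f k * g k = 1) →
    dF f s l * aF g s l = 1 := by
  induction l with
  | zero => intro s _; simp [aF_zero, dF_zero]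
  | succ l ih =>
    intro s h
    have h2 := ih (s + 1) (fun k h1 h2 => h k (by omega) (by omega))
    rw [aF_succ, dF_succ, mul_assoc, ← mul_assoc (f s), h s le_rfl (by omega), one_mul, h2]

lemma aF_shift (f : ℕ → M) (P : M) (l : ℕ) : ∀ s,
    (∀ k, s ≤ k → k < s + l → P * f (k + 1) = f k * P) →
    P * aF f (s + 1) l = aF f s l * P := by
  induction l with
  | zero => intro s _; simp [aF_zero]
  | succ l ih =>
    intro s h
    rw [aF_succ, aF_succ, ← mul_assoc, h s le_rfl (by omega), mul_assoc,
      ih (s + 1) (fun k h1 h2 => h k (by omega) (by omega)), mul_assoc]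

/-- palindrome identity -/
lemma aF_pal (T : ℕ → M) (N : ℕ)
    (hc : ∀ i j, i + 1 < j → j < N → T i * T j = T j * T i)
    (hb : ∀ i, i + 1 < N → T i * T (i + 1) * T i = T (i + 1) * T i * T (i + 1)) (m : ℕ) :
    ∀ s, s + m < N → aF T s (m + 1) * dF T s m = dF T s (m + 1) * aF T (s + 1) m := by
  induction m with
  | zero => intro s _; simp [aF_succ, dF_succ, aF_zero, dF_zero]
  | succ m ih =>
    intro s h
    have h1 := ih (s + 1) (by omega)
    have ca : T s * aF T (s + 2) m = aF T (s + 2) m * T s :=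
      aF_comm T _ m _ (fun k h1 h2 => hc s k (by omega) (by omega))
    have cd : T s * dF T (s + 2) m = dF T (s + 2) m * T s :=
      dF_comm T _ m _ (fun k h1 h2 => hc s k (by omega) (by omega))
    calc aF T s (m + 2) * dF T s (m + 1)
        = T s * (aF T (s + 1) (m + 1) * dF T (s + 1) m) * T s := by
          rw [aF_succ, dF_succ]; simp only [mul_assoc]
      _ = T s * dF T (s + 2) m * T (s + 1) * (aF T (s + 2) m * T s) := by
          rw [h1, dF_succ]; simp only [mul_assoc]
      _ = dF T (s + 2) m * (T s * T (s + 1) * T s) * aF T (s + 2) m := by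
          rw [← ca, cd]; simp only [mul_assoc]
      _ = dF T s (m + 2) * aF T (s + 1) (m + 1) := by
          rw [hb s (by omega), dF_succ, dF_succ, aF_succ]; simp only [mul_assoc]

/-- longest word -/
def eW (T : ℕ → M) (s : ℕ) : ℕ → M
  | 0 => 1
  | m + 1 => aF T s m * eW T s m

/-- inverse longest word -/
def vW (U : ℕ → M) : ℕ → ℕ → M
  | _, 0 => 1
  | s, m + 1 => vW U (s + 1) m * aF U s m

lemma eW_rec (T : ℕ → M) (N : ℕ)
    (hc : ∀ i j, i + 1 < j → j < N → T i * T j = T j * T i)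
    (hb : ∀ i, i + 1 < N → T i * T (i + 1) * T i = T (i + 1) * T i * T (i + 1)) (m : ℕ) :
    ∀ s, s + m ≤ N → eW T s (m + 1) = dF T s m * eW T (s + 1) m := by
  induction m with
  | zero => intro s _; simp [eW, aF_zero, dF_zero]
  | succ m ih =>
    intro s h
    rw [eW, ih s (by omega), ← mul_assoc, aF_pal T N hc hb m s (by omega), mul_assoc, eW]

lemma eW_vW (T U : ℕ → M) (N : ℕ)
    (hc : ∀ i j, i + 1 < j → j < N → T i * T j = T j * T i)
    (hb : ∀ i, i + 1 < N → T i * T (i + 1) * T i = T (i + 1) * T i * T (i + 1))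
    (hTU : ∀ k, k < N → T k * U k = 1) (m : ℕ) :
    ∀ s, s + m ≤ N + 1 → eW T s m * vW U s m = 1 := by
  induction m with
  | zero => intro s _; simp [eW, vW]
  | succ m ih =>
    intro s h
    rw [eW_rec T N hc hb m s (by omega), vW, mul_assoc, ← mul_assoc (eW T (s + 1) m),
      ih (s + 1) (by omega), one_mul]
    exact dF_aF_inv _ _ _ _ (fun k h1 h2 => hTU k (by omega))

lemma vW_shift (U : ℕ → M) (P : M) (N : ℕ) (hP : ∀ k, k + 1 < N → P * U (k + 1) = U k * P)
    (m : ℕ) : ∀ s, s + m ≤ N → P * vW U (s + 1) m = vW U s m * P := by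
  induction m with
  | zero => intro s _; simp [vW]
  | succ m ih =>
    intro s h
    rw [vW, vW, ← mul_assoc, ih (s + 1) (by omega), mul_assoc,
      aF_shift U P m s (fun k h1 h2 => hP k (by omega)), mul_assoc]

lemma vW_comm (U : ℕ → M) (x : M) (m : ℕ) :
    ∀ s, (∀ k, s ≤ k → k + 1 < s + m → x * U k = U k * x) → x * vW U s m = vW U s m * x := by
  induction m with
  | zero => intro s _; simp [vW]
  | succ m ih =>
    intro s h
    rw [vW, ← mul_assoc, ih (s + 1) (fun k h1 h2 => h k (by omega) (by omega)), mul_assoc,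
      aF_comm U x m s (fun k h1 h2 => h k (by omega) (by omega)), mul_assoc]

/-- descending product of the `aF T 0 (N - j)` for `j < i`. -/
def cW (T : ℕ → M) (N : ℕ) : ℕ → M
  | 0 => 1
  | i + 1 => cW T N i * aF T 0 (N - i)

lemma cW_eW (T : ℕ → M) (N : ℕ) (i : ℕ) (hi : i ≤ N + 1) :
    cW T N i * eW T 0 (N + 1 - i) = eW T 0 (N + 1) := by
  induction i with
  | zero => simp [cW]
  | succ i ih =>
    rw [← ih (by omega), cW]
    have : N + 1 - i = (N - i) + 1 := by omega
    rw [this, eW, mul_assoc]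
    congr 3
    omega

lemma aF_pow_shift (T : ℕ → M) (P : M) (N l : ℕ) (hP : ∀ k, k + 1 < N → P * T (k + 1) = T k * P)
    (i : ℕ) (h : i + l ≤ N) : P ^ i * aF T i l = aF T 0 l * P ^ i := by
  induction i with
  | zero => simp
  | succ i ih =>
    rw [pow_succ, mul_assoc, aF_shift T P l i (fun k h1 h2 => hP k (by omega)), ← mul_assoc,
      ih (by omega), mul_assoc]

lemma Yprod (T U Y : ℕ → M) (P : M) (N : ℕ)
    (hc : ∀ i j, i + 1 < j → j < N → T i * T j = T j * T i)
    (hb : ∀ i, i + 1 < N → T i * T (i + 1) * T i = T (i + 1) * T i * T (i + 1))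
    (hTU : ∀ k, k < N → T k * U k = 1)
    (hcU : ∀ i j, i + 1 < j → j < N → T j * U i = U i * T j)
    (hPT : ∀ k, k + 1 < N → P * T (k + 1) = T k * P)
    (hPU : ∀ k, k + 1 < N → P * U (k + 1) = U k * P)
    (hPn : ∀ k, k < N → T k * P ^ (N + 1) = P ^ (N + 1) * T k)
    (hY : ∀ i, Y i = aF T i (N - i) * P * aF U 0 i) :
    ((List.range (N + 1)).map Y).prod = P ^ (N + 1) := by
  have key : ∀ i, i ≤ N + 1 → ((List.range i).map Y).prod = cW T N i * P ^ i * vW U 0 i := by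
    intro i
    induction i with
    | zero => intro _; simp [cW, vW]
    | succ i ih =>
      intro hi
      rw [List.range_succ, List.map_append, List.prod_append, ih (by omega)]
      simp only [List.map_cons, List.map_nil, List.prod_cons, List.prod_nil, mul_one]
      have h1 : vW U 0 i * aF T i (N - i) = aF T i (N - i) * vW U 0 i :=
        aF_comm T _ _ _ (fun k h1 h2 => (vW_comm U (T k) i 0
          (fun j h3 h4 => hcU j k (by omega) (by omega))).symm)
      have h2 : P * vW U (0 + 1) i = vW U 0 i * P := vW_shift U P N hPU i 0 (by omega)
      have h3 := aF_pow_shift T P N (N - i) hPT i (by omega)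
      rw [hY i]
      calc cW T N i * P ^ i * vW U 0 i * (aF T i (N - i) * P * aF U 0 i)
          = cW T N i * (P ^ i * ((vW U 0 i * aF T i (N - i)) * P)) * aF U 0 i := by
            simp only [mul_assoc]
        _ = cW T N i * ((P ^ i * aF T i (N - i)) * (vW U 0 i * P)) * aF U 0 i := by
            rw [h1]; simp only [mul_assoc]
        _ = _ := by
            rw [h3, ← h2, cW, vW, pow_succ]; simp only [mul_assoc]
  rw [key _ le_rfl]
  have h4 := cW_eW T N (N + 1) le_rfl
  simp only [Nat.sub_self, eW, mul_one] at h4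
  rw [h4]
  have h5 : P ^ (N + 1) * (aF T 0 N * eW T 0 N) = (aF T 0 N * eW T 0 N) * P ^ (N + 1) := by
    have h6 : ∀ m s, s + m ≤ N + 1 → P ^ (N + 1) * eW T s m = eW T s m * P ^ (N + 1) := by
      intro m
      induction m with
      | zero => intro s _; simp [eW]
      | succ m ih =>
        intro s h
        rw [eW, ← mul_assoc, aF_comm T _ m s (fun k h1 h2 => (hPn k (by omega)).symm), mul_assoc,
          ih s (by omega), mul_assoc]
    exact h6 (N + 1) 0 (by omega)
  rw [← h5, mul_assoc]
  have := eW_vW T U N hc hb hTU (N + 1) 0 (by omega)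
  rw [eW] at this
  rw [this, mul_one]

end MonoidLemmas

section Ops
variable {F : Type*} [Field F] {n : ℕ}

lemma mono_mul_mono (a b : Fin n →₀ ℤ) (r s : F) :
    mono a r * mono b s = mono (a + b) (r * s) := AddMonoidAlgebra.single_mul_single _ _ _ _

lemma mono_zero_one : (mono 0 1 : Laur F n) = 1 := rfl

lemma smul_mono (c : F) (a : Fin n →₀ ℤ) (r : F) : c • mono a r = mono a (c * r) :=
  AddMonoidAlgebra.smul_single' _ _ _

lemma mono_ext {f g : Module.End F (Laur F n)} (h : ∀ v r, f (mono v r) = g (mono v r)) :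
    f = g := by
  apply LinearMap.ext
  intro p
  induction p using AddMonoidAlgebra.induction_linear with
  | zero => simp
  | add x y hx hy => simp [hx, hy]
  | single m r => exact h m r

lemma mono_ne_zero (a : Fin n →₀ ℤ) {r : F} (hr : r ≠ 0) : mono a r ≠ 0 := by
  unfold mono
  simpa [AddMonoidAlgebra.single_eq_zero] using hr

lemma Xel_ne_zero (i : Fin n) : (Xel i : Laur F n) ≠ 0 := mono_ne_zero _ one_ne_zero

lemma lin_X_ne_zero {i j : Fin n} (h : i ≠ j) (a b : F) (ha : a ≠ 0) :
    (a • Xel j - b • Xel i : Laur F n) ≠ 0 := by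
  intro h0
  have h1 := congrArg (fun p : Laur F n => p.coeff (Finsupp.single j 1)) h0
  simp [Xel, mono, AddMonoidAlgebra.coeff_sub,
    Finsupp.single_left_inj, h, ha] at h1

lemma X_sub_ne_zero {i j : Fin n} (h : i ≠ j) : (Xel j - Xel i : Laur F n) ≠ 0 := by
  simpa using lin_X_ne_zero (F := F) h 1 1 one_ne_zero

lemma mulOp_mul (x y : Laur F n) : mulOp (x * y) = mulOp x * mulOp y := by
  apply LinearMap.ext; intro p; simp [mulOp]

/-- Operators of group type: a permutation of the variables composed with `q`-shifts. -/
def IsG (q : F) (f : Module.End F (Laur F n)) : Prop :=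
  ∃ (w : Equiv.Perm (Fin n)) (l : Fin n → ℤ), ∀ v r,
    f (mono v r) = q ^ (∑ i, l i * v i) • mono (Finsupp.equivMapDomain w v) r

lemma equivMapDomain_add' (w : Equiv.Perm (Fin n)) (a b : Fin n →₀ ℤ) :
    Finsupp.equivMapDomain w (a + b) = Finsupp.equivMapDomain w a + Finsupp.equivMapDomain w b := by
  ext i; simp

namespace IsG
variable {q : F} {f g : Module.End F (Laur F n)}

lemma map_mul (hq : q ≠ 0) (hf : IsG q f) (x y : Laur F n) : f (x * y) = f x * f y := by
  obtain ⟨w, l, h⟩ := hf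
  induction x using AddMonoidAlgebra.induction_linear with
  | zero => simp
  | add x y hx hy => simp [add_mul, hx, hy]
  | single m r =>
    induction y using AddMonoidAlgebra.induction_linear with
    | zero => simp
    | add x y hx hy => simp [mul_add, hx, hy]
    | single m' r' =>
      change f (mono m r * mono m' r') = f (mono m r) * f (mono m' r')
      rw [mono_mul_mono, h, h, h, smul_mul_smul_comm, mono_mul_mono, ← zpow_add₀ hq,
        equivMapDomain_add']
      congr 2
      rw [← Finset.sum_add_distrib]
      exact Finset.sum_congr rfl (fun i _ => by simp [mul_add])

lemma map_one (hf : IsG q f) : f 1 = 1 := by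
  obtain ⟨w, l, h⟩ := hf
  rw [← mono_zero_one, h]
  simp [mono]

lemma one : IsG q (1 : Module.End F (Laur F n)) :=
  ⟨1, 0, fun v r => by
    have : Finsupp.equivMapDomain 1 v = v := by ext i; rfl
    simp [this]⟩

lemma mul (hq : q ≠ 0) (hf : IsG q f) (hg : IsG q g) : IsG q (f * g) := by
  obtain ⟨w, l, h⟩ := hf
  obtain ⟨w', l', h'⟩ := hg
  refine ⟨w * w', fun i => l' i + l (w' i), fun v r => ?_⟩
  rw [Module.End.mul_apply, h', map_smul, h, smul_smul, ← zpow_add₀ hq]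
  have e1 : Finsupp.equivMapDomain w (Finsupp.equivMapDomain w' v)
      = Finsupp.equivMapDomain (w * w') v := by ext i; simp [Equiv.Perm.mul_def]
  rw [e1]
  congr 2
  simp only [add_mul, Finset.sum_add_distrib, Finsupp.equivMapDomain_apply]
  congr 1
  rw [← Equiv.sum_comp w' (fun i => l i * v (w'.symm i))]
  simp

lemma pow (hq : q ≠ 0) (hf : IsG q f) (k : ℕ) : IsG q (f ^ k) := by
  induction k with
  | zero => simpa using IsG.one
  | succ k ih => rw [pow_succ]; exact IsG.mul hq ih hf

lemma exists_inv (hq : q ≠ 0) (hf : IsG q f) : ∃ g, IsG q g ∧ f * g = 1 ∧ g * f = 1 := by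
  obtain ⟨w, l, h⟩ := hf
  let M : Multiplicative (Fin n →₀ ℤ) →* Laur F n :=
    { toFun := fun v => mono (Finsupp.equivMapDomain w⁻¹ v.toAdd)
        (q ^ (∑ i, (- l (w⁻¹ i)) * v.toAdd i))
      map_one' := by
        simp [mono, AddMonoidAlgebra.one_def]
      map_mul' := fun a b => by
        rw [mono_mul_mono, ← zpow_add₀ hq, toAdd_mul, equivMapDomain_add',
          ← Finset.sum_add_distrib]
        congr 2
        exact Finset.sum_congr rfl (fun i _ => by simp [mul_add]) }
  let G : Module.End F (Laur F n) := (AddMonoidAlgebra.lift F (Laur F n) (Fin n →₀ ℤ) M).toLinearMap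
  have hG : ∀ v r, G (mono v r) = q ^ (∑ i, (- l (w⁻¹ i)) * v i) •
      mono (Finsupp.equivMapDomain w⁻¹ v) r := by
    intro v r
    change (AddMonoidAlgebra.lift F (Laur F n) (Fin n →₀ ℤ) M) (AddMonoidAlgebra.single v r) = _
    rw [AddMonoidAlgebra.lift_single]
    change r • mono (Finsupp.equivMapDomain w⁻¹ v) (q ^ (∑ i, (- l (w⁻¹ i)) * v i)) = _
    rw [smul_mono, smul_mono, mul_comm]
  refine ⟨G, ⟨w⁻¹, _, hG⟩, ?_, ?_⟩
  · apply mono_ext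
    intro v r
    rw [Module.End.mul_apply, hG, map_smul, h, smul_smul, ← zpow_add₀ hq]
    have e1 : Finsupp.equivMapDomain w (Finsupp.equivMapDomain w⁻¹ v) = v := by
      ext i; simp [Equiv.Perm.inv_def]
    have e2 : (∑ i, (- l (w⁻¹ i)) * v i) + ∑ i, l i * (Finsupp.equivMapDomain w⁻¹ v) i = 0 := by
      rw [← Equiv.sum_comp w⁻¹ (fun i => l i * (Finsupp.equivMapDomain w⁻¹ v) i),
        ← Finset.sum_add_distrib]
      exact Finset.sum_eq_zero (fun i _ => by simp [Equiv.Perm.inv_def])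
    rw [e1, e2]; simp
  · apply mono_ext
    intro v r
    rw [Module.End.mul_apply, h, map_smul, hG, smul_smul, ← zpow_add₀ hq]
    have e1 : Finsupp.equivMapDomain w⁻¹ (Finsupp.equivMapDomain w v) = v := by
      ext i; simp [Equiv.Perm.inv_def]
    have e2 : (∑ i, l i * v i) + ∑ i, (- l (w⁻¹ i)) * (Finsupp.equivMapDomain w v) i = 0 := by
      rw [← Equiv.sum_comp w (fun i => (- l (w⁻¹ i)) * (Finsupp.equivMapDomain w v) i),
        ← Finset.sum_add_distrib]
      exact Finset.sum_eq_zero (fun i _ => by simp)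
    rw [e1, e2]; simp

lemma injective (hq : q ≠ 0) (hf : IsG q f) : Function.Injective f := by
  obtain ⟨g, _, _, h⟩ := IsG.exists_inv hq hf
  intro x y hxy
  have := congrArg g hxy
  rwa [← Module.End.mul_apply, ← Module.End.mul_apply, h] at this

end IsG

/-- The defining relation of the Demazure–Lusztig operator. -/
def IsT (τ : F) (i j : Fin n) (s t : Module.End F (Laur F n)) : Prop :=
  ∀ p, (Xel j - Xel i) * t p = (τ⁻¹ • Xel j - τ • Xel i) * s p + (τ - τ⁻¹) • (Xel j * p)

lemma T_intertwine {q τ c : F} (hq : q ≠ 0) (hc : c ≠ 0) {i j i' j' : Fin n} (hij : i' ≠ j')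
    {s t s' t' σ : Module.End F (Laur F n)} (ht : IsT τ i j s t) (ht' : IsT τ i' j' s' t')
    (hσ : IsG q σ) (hi : σ (Xel i) = c • Xel i') (hj : σ (Xel j) = c • Xel j')
    (hs : σ * s = s' * σ) : σ * t = t' * σ := by
  apply LinearMap.ext
  intro p
  have h1 := congrArg σ (ht p)
  have h2 := ht' (σ p)
  have h3 : σ (s p) = s' (σ p) := congrArg (fun f => f p) hs
  simp only [IsG.map_mul hq hσ, map_sub, map_add, map_smul, hi, hj, h3] at h1
  apply mul_left_cancel₀ (X_sub_ne_zero (F := F) hij)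
  apply smul_right_injective (Laur F n) hc
  simp only [Module.End.mul_apply]
  rw [h2]
  simp only [Algebra.smul_def] at h1 ⊢
  linear_combination h1

/-- `T` commutes with invariant multiplication -/
lemma T_mul_inv {τ : F} {i j : Fin n} (hij : i ≠ j) {s t : Module.End F (Laur F n)}
    (ht : IsT τ i j s t) (u : Laur F n) (hu : ∀ p, s (u * p) = u * s p) (p : Laur F n) :
    t (u * p) = u * t p := by
  apply mul_left_cancel₀ (X_sub_ne_zero (F := F) hij)
  have h1 := ht (u * p)
  have h2 := ht p
  rw [hu] at h1
  simp only [Algebra.smul_def] at h1 h2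
  linear_combination h1 - u * h2

lemma T_X {q τ : F} (hq : q ≠ 0) {i j : Fin n} (hij : i ≠ j) {s t : Module.End F (Laur F n)}
    (ht : IsT τ i j s t) (hs : IsG q s) (hsi : s (Xel i) = Xel j) (p : Laur F n) :
    t (Xel i * p) = Xel j * (t p + (τ⁻¹ - τ) • p) := by
  apply mul_left_cancel₀ (X_sub_ne_zero (F := F) hij)
  have h1 := ht (Xel i * p)
  have h2 := ht p
  rw [IsG.map_mul hq hs, hsi] at h1
  simp only [Algebra.smul_def, map_sub] at h1 h2 ⊢
  linear_combination h1 - Xel j * h2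

lemma T_one {q τ : F} {i j : Fin n} (hij : i ≠ j) {s t : Module.End F (Laur F n)}
    (ht : IsT τ i j s t) (hs : IsG q s) : t 1 = τ • 1 := by
  apply mul_left_cancel₀ (X_sub_ne_zero (F := F) hij)
  have h2 := ht 1
  rw [IsG.map_one hs] at h2
  simp only [Algebra.smul_def, map_sub] at h2 ⊢
  linear_combination h2

lemma T_braid_field {K : Type*} [Field K] (x y z a b p p1 p2 p12 p21 p121 : K)
    (hxy : y - x ≠ 0) (hyz : z - y ≠ 0) (hxz : z - x ≠ 0)
    (u u1 u2 u12 v v1 w u' u2' u1' u21' v' v2' w' : K)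
    (hu : (y - x) * u = (a * y - b * x) * p1 + (b - a) * (y * p))
    (hu1 : (x - y) * u1 = (a * x - b * y) * p + (b - a) * (x * p1))
    (hu2 : (z - x) * u2 = (a * z - b * x) * p21 + (b - a) * (z * p2))
    (hu12 : (z - y) * u12 = (a * z - b * y) * p121 + (b - a) * (z * p12))
    (hv : (z - y) * v = (a * z - b * y) * u2 + (b - a) * (z * u))
    (hv1 : (z - x) * v1 = (a * z - b * x) * u12 + (b - a) * (z * u1))
    (hw : (y - x) * w = (a * y - b * x) * v1 + (b - a) * (y * v))
    (hu' : (z - y) * u' = (a * z - b * y) * p2 + (b - a) * (z * p))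
    (hu2' : (y - z) * u2' = (a * y - b * z) * p + (b - a) * (y * p2))
    (hu1' : (z - x) * u1' = (a * z - b * x) * p12 + (b - a) * (z * p1))
    (hu21' : (y - x) * u21' = (a * y - b * x) * p121 + (b - a) * (y * p21))
    (hv' : (y - x) * v' = (a * y - b * x) * u1' + (b - a) * (y * u'))
    (hv2' : (z - x) * v2' = (a * z - b * x) * u21' + (b - a) * (z * u2'))
    (hw' : (z - y) * w' = (a * z - b * y) * v2' + (b - a) * (z * v')) : w = w' := by
  have hxy' : x - y ≠ 0 := by rw [← neg_sub]; exact neg_ne_zero.2 hxy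
  have hyz' : y - z ≠ 0 := by rw [← neg_sub]; exact neg_ne_zero.2 hyz
  have e1 : u = ((a * y - b * x) * p1 + (b - a) * (y * p)) / (y - x) := by
    rw [eq_div_iff hxy, mul_comm, hu]
  have e2 : u1 = ((a * x - b * y) * p + (b - a) * (x * p1)) / (x - y) := by
    rw [eq_div_iff hxy', mul_comm, hu1]
  have e3 : u2 = ((a * z - b * x) * p21 + (b - a) * (z * p2)) / (z - x) := by
    rw [eq_div_iff hxz, mul_comm, hu2]
  have e4 : u12 = ((a * z - b * y) * p121 + (b - a) * (z * p12)) / (z - y) := by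
    rw [eq_div_iff hyz, mul_comm, hu12]
  have e5 : u' = ((a * z - b * y) * p2 + (b - a) * (z * p)) / (z - y) := by
    rw [eq_div_iff hyz, mul_comm, hu']
  have e6 : u2' = ((a * y - b * z) * p + (b - a) * (y * p2)) / (y - z) := by
    rw [eq_div_iff hyz', mul_comm, hu2']
  have e7 : u1' = ((a * z - b * x) * p12 + (b - a) * (z * p1)) / (z - x) := by
    rw [eq_div_iff hxz, mul_comm, hu1']
  have e8 : u21' = ((a * y - b * x) * p121 + (b - a) * (y * p21)) / (y - x) := by
    rw [eq_div_iff hxy, mul_comm, hu21']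
  have f1 : v = ((a * z - b * y) * u2 + (b - a) * (z * u)) / (z - y) := by
    rw [eq_div_iff hyz, mul_comm, hv]
  have f2 : v1 = ((a * z - b * x) * u12 + (b - a) * (z * u1)) / (z - x) := by
    rw [eq_div_iff hxz, mul_comm, hv1]
  have f3 : v' = ((a * y - b * x) * u1' + (b - a) * (y * u')) / (y - x) := by
    rw [eq_div_iff hxy, mul_comm, hv']
  have f4 : v2' = ((a * z - b * x) * u21' + (b - a) * (z * u2')) / (z - x) := by
    rw [eq_div_iff hxz, mul_comm, hv2']
  have g1 : w = ((a * y - b * x) * v1 + (b - a) * (y * v)) / (y - x) := by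
    rw [eq_div_iff hxy, mul_comm, hw]
  have g2 : w' = ((a * z - b * y) * v2' + (b - a) * (z * v')) / (z - y) := by
    rw [eq_div_iff hyz, mul_comm, hw']
  rw [g1, g2, f1, f2, f3, f4, e1, e2, e3, e4, e5, e6, e7, e8]
  have r1 : x - y = -(y - x) := by ring
  have r2 : y - z = -(z - y) := by ring
  rw [r1, r2, div_neg, div_neg]
  clear * - hxy hyz hxz
  field_simp
  ring

lemma T_braid {q τ : F} (hq : q ≠ 0) {i j k : Fin n} (hij : i ≠ j) (hjk : j ≠ k) (hik : i ≠ k)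
    {s1 s2 t1 t2 : Module.End F (Laur F n)} (ht1 : IsT τ i j s1 t1) (ht2 : IsT τ j k s2 t2)
    (hs1 : IsG q s1) (hs2 : IsG q s2) (h1i : s1 (Xel i) = Xel j) (h1j : s1 (Xel j) = Xel i)
    (h1k : s1 (Xel k) = Xel k) (h2i : s2 (Xel i) = Xel i) (h2j : s2 (Xel j) = Xel k)
    (h2k : s2 (Xel k) = Xel j) (h11 : s1 * s1 = 1) (h22 : s2 * s2 = 1)
    (hb : s1 * s2 * s1 = s2 * s1 * s2) : t1 * t2 * t1 = t2 * t1 * t2 := by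
  apply LinearMap.ext
  intro p
  have m1 := IsG.map_mul hq hs1
  have m2 := IsG.map_mul hq hs2
  have a1 : ∀ p, s1 (s1 p) = p := fun p => congrArg (fun f => f p) h11
  have a2 : ∀ p, s2 (s2 p) = p := fun p => congrArg (fun f => f p) h22
  have a3 : ∀ p, s2 (s1 (s2 p)) = s1 (s2 (s1 p)) := fun p => (congrArg (fun f => f p) hb).symm
  apply IsFractionRing.injective (Laur F n) (FractionRing (Laur F n))
  set ι := algebraMap (Laur F n) (FractionRing (Laur F n)) with hι
  have ne : ∀ {a b : Fin n}, a ≠ b → ι (Xel b) - ι (Xel a) ≠ 0 := by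
    intro a b hab
    rw [← map_sub]
    exact (map_ne_zero_iff ι (IsFractionRing.injective _ _)).2 (X_sub_ne_zero hab)
  have hu := ht1 p
  have hu1 := congrArg s1 hu
  have hu2 := congrArg s2 hu
  have hu12 := congrArg s1 hu2
  have hv := ht2 (t1 p)
  have hv1 := congrArg s1 hv
  have hw := ht1 (t2 (t1 p))
  have ku := ht2 p
  have ku2 := congrArg s2 ku
  have ku1 := congrArg s1 ku
  have ku21 := congrArg s2 ku1
  have kv := ht1 (t2 p)
  have kv2 := congrArg s2 kv
  have kw := ht2 (t1 (t2 p))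
  simp only [m1, m2, map_sub, map_add, map_smul, h1i, h1j, h1k, h2i, h2j, h2k, a1, a2, a3]
    at hu hu1 hu2 hu12 hv hv1 hw ku ku2 ku1 ku21 kv kv2 kw
  replace hu := congrArg ι hu
  replace hu1 := congrArg ι hu1
  replace hu2 := congrArg ι hu2
  replace hu12 := congrArg ι hu12
  replace hv := congrArg ι hv
  replace hv1 := congrArg ι hv1
  replace hw := congrArg ι hw
  replace ku := congrArg ι ku
  replace ku1 := congrArg ι ku1
  replace ku2 := congrArg ι ku2
  replace ku21 := congrArg ι ku21
  replace kv := congrArg ι kv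
  replace kv2 := congrArg ι kv2
  replace kw := congrArg ι kw
  simp only [Algebra.smul_def, map_sub, map_add, _root_.map_mul]
    at hu hu1 hu2 hu12 hv hv1 hw ku ku2 ku1 ku21 kv kv2 kw
  exact T_braid_field _ _ _ _ _ _ _ _ _ _ _ (ne hij) (ne hjk) (ne hik) _ _ _ _ _ _ _ _ _ _ _ _ _ _
    hu hu1 hu2 hu12 hv hv1 hw ku ku2 ku1 ku21 kv kv2 kw

end Ops

section AbstractRel
variable {F A : Type*} [Field F] [Ring A] [Algebra F A]

/-- The relations used in the abstract part of the argument. -/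
structure DRel (N : ℕ) (q κ c : F) (T U X D : ℕ → A) (Xi P Pi Y Yi : A) : Prop where
  q0 : q ≠ 0
  TU : ∀ k, k < N → T k * U k = 1
  UT : ∀ k, k < N → U k * T k = 1
  Udef : ∀ k, U k = T k + κ • (1 : A)
  TX : ∀ k, k < N → T k * X k = X (k + 1) * U k
  TXc : ∀ k j, k < N → j ≤ N → j ≠ k → j ≠ k + 1 → T k * X j = X j * T k
  XX : ∀ i j, i ≤ N → j ≤ N → X i * X j = X j * X i
  XXi : X N * Xi = 1
  XiX : Xi * X N = 1
  PX : ∀ j, j < N → P * X (j + 1) = X j * P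
  PX0 : P * X 0 = q • (X N * P)
  PT : ∀ j, j + 1 < N → P * T (j + 1) = T j * P
  PPT : 0 < N → T (N - 1) * (P * P) = P * P * T 0
  PPi : P * Pi = 1
  PiP : Pi * P = 1
  TT : ∀ i j, i + 1 < j → j < N → T i * T j = T j * T i
  TB : ∀ i, i + 1 < N → T i * T (i + 1) * T i = T (i + 1) * T i * T (i + 1)
  Ydef : Y = P * aF U 0 N
  YYi : Y * Yi = 1
  YiY : Yi * Y = 1
  DN : D N = c • (Xi * (Y - Yi))
  Drec : ∀ i, i < N → D i = T i * D (i + 1) * T i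

/-- inverse commutation -/
lemma inv_comm_of {x u v : A} (h : x * u = u * x) (h1 : u * v = 1) (h2 : v * u = 1) :
    x * v = v * x := by
  calc x * v = v * (u * x) * v := by rw [← mul_assoc v, h2, one_mul]
    _ = v * x * (u * v) := by rw [← h]; simp only [mul_assoc]
    _ = v * x := by rw [h1, mul_one]

lemma conj_of {x y u v : A} (h : x * u = u * y) (h1 : u * v = 1) (h2 : v * u = 1) :
    v * x = y * v := by
  calc v * x = v * (x * u) * v := by simp only [mul_assoc, h1, mul_one]
    _ = (v * u) * (y * v) := by rw [h]; simp only [mul_assoc]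
    _ = y * v := by rw [h2, one_mul]

namespace DRel
variable {N : ℕ} {q κ c : F} {T U X D : ℕ → A} {Xi P Pi Y Yi : A}

lemma comm_U (k : ℕ) (x : A) (R : DRel N q κ c T U X D Xi P Pi Y Yi) (h : x * T k = T k * x) :
    x * U k = U k * x := by
  rw [R.Udef, mul_add, add_mul, h]; simp

lemma TUc (R : DRel N q κ c T U X D Xi P Pi Y Yi) (i j : ℕ) (h : i + 1 < j) (hj : j < N) :
    T j * U i = U i * T j := R.comm_U i _ (R.TT i j h hj).symm

lemma TUc' (R : DRel N q κ c T U X D Xi P Pi Y Yi) (i j : ℕ) (h : i + 1 < j) (hj : j < N) :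
    T i * U j = U j * T i := R.comm_U j _ (R.TT i j h hj)

lemma PU (R : DRel N q κ c T U X D Xi P Pi Y Yi) (j : ℕ) (h : j + 1 < N) :
    P * U (j + 1) = U j * P := by
  rw [R.Udef, R.Udef, mul_add, add_mul, R.PT j h]; simp

lemma XT (R : DRel N q κ c T U X D Xi P Pi Y Yi) (k : ℕ) (h : k < N) :
    X k * T k = U k * X (k + 1) := by
  calc X k * T k = U k * (T k * X k) * T k := by rw [← mul_assoc (U k), R.UT k h, one_mul]
    _ = U k * X (k + 1) * (U k * T k) := by rw [R.TX k h]; simp only [mul_assoc]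
    _ = _ := by rw [R.UT k h, mul_one]

lemma Xdown (R : DRel N q κ c T U X D Xi P Pi Y Yi) (k : ℕ) (h : k < N) :
    X k = U k * X (k + 1) * U k := by
  rw [← R.XT k h, mul_assoc, R.TU k h, mul_one]

lemma Tsq (R : DRel N q κ c T U X D Xi P Pi Y Yi) (k : ℕ) (h : k < N) :
    T k * T k = 1 - κ • T k := by
  have := R.TU k h
  rw [R.Udef, mul_add] at this
  rw [← this]; simp

lemma TX1 (R : DRel N q κ c T U X D Xi P Pi Y Yi) (k : ℕ) (h : k < N) :
    T k * X (k + 1) = X k * T k - κ • X (k + 1) := by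
  rw [R.XT k h, R.Udef, add_mul]; simp

lemma TX0 (R : DRel N q κ c T U X D Xi P Pi Y Yi) (k : ℕ) (h : k < N) :
    X (k + 1) * T k = T k * X k - κ • X (k + 1) := by
  rw [R.TX k h, R.Udef, mul_add]; simp

lemma T_aFU (R : DRel N q κ c T U X D Xi P Pi Y Yi) (k : ℕ) (hk : k + 1 < N) (l : ℕ) :
    ∀ s, s ≤ k → k + 1 < s + l → s + l ≤ N → T (k + 1) * aF U s l = aF U s l * T k := by
  induction l with
  | zero => intro s h1 h2; omega
  | succ l ih =>
    intro s h1 h2 h3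
    rcases h1.lt_or_eq with h | rfl
    · rw [aF_succ, ← mul_assoc, R.TUc s (k + 1) (by omega) hk, mul_assoc,
        ih (s + 1) (by omega) (by omega) (by omega), mul_assoc]
    · obtain ⟨m, rfl⟩ : ∃ m, l = m + 1 := ⟨l - 1, by omega⟩
      have hc : T s * aF U (s + 1 + 1) m = aF U (s + 1 + 1) m * T s :=
        aF_comm U _ m _ (fun j h4 h5 => R.TUc' s j (by omega) (by omega))
      have hb : T (s + 1) * U s * U (s + 1) = U s * U (s + 1) * T s := by
        rw [mul_assoc]
        refine (conj_of (?_ : T s * (T (s + 1) * T s) = T (s + 1) * T s * T (s + 1)) ?_ ?_).symm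
        · rw [← mul_assoc, R.TB s hk]
        · rw [mul_assoc, ← mul_assoc (T s), R.TU s (by omega), one_mul, R.TU _ hk]
        · rw [mul_assoc, ← mul_assoc (U (s + 1)), R.UT _ hk, one_mul, R.UT s (by omega)]
      rw [aF_succ, aF_succ]
      calc T (s + 1) * (U s * (U (s + 1) * aF U (s + 1 + 1) m))
          = (T (s + 1) * U s * U (s + 1)) * aF U (s + 1 + 1) m := by simp only [mul_assoc]
        _ = U s * U (s + 1) * (T s * aF U (s + 1 + 1) m) := by rw [hb]; simp only [mul_assoc]
        _ = _ := by rw [hc]; simp only [mul_assoc]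

lemma TXi (R : DRel N q κ c T U X D Xi P Pi Y Yi) (k : ℕ) (hk : k + 1 < N) : T k * Xi = Xi * T k :=
  inv_comm_of (R.TXc k N (by omega) le_rfl (by omega) (by omega)) R.XXi R.XiX

lemma TY (R : DRel N q κ c T U X D Xi P Pi Y Yi) (k : ℕ) (hk : k + 1 < N) : T k * Y = Y * T k := by
  rw [R.Ydef, ← mul_assoc, ← R.PT k hk, mul_assoc, R.T_aFU k hk N 0 (by omega) (by omega) (by omega),
    mul_assoc]

lemma TYi (R : DRel N q κ c T U X D Xi P Pi Y Yi) (k : ℕ) (hk : k + 1 < N) : T k * Yi = Yi * T k :=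
  inv_comm_of (R.TY k hk) R.YYi R.YiY

lemma TDN (R : DRel N q κ c T U X D Xi P Pi Y Yi) (k : ℕ) (hk : k + 1 < N) : T k * D N = D N * T k := by
  rw [R.DN, mul_smul_comm, smul_mul_assoc, ← mul_assoc, R.TXi k hk, mul_assoc, mul_assoc, mul_sub,
    sub_mul, R.TY k hk, R.TYi k hk]

lemma PDN (R : DRel N q κ c T U X D Xi P Pi Y Yi) (M : ℕ) (hM : M + 1 = N) : P * D N = D M * P := by
  have hl : M < N := by omega
  have h1 : (T M * P) * Y = Y * (T M * P) := by
    have e1 : (T M * P) * Y = P * P * aF U 1 M := by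
      have := R.PPT (by omega)
      rw [← hM, Nat.add_sub_cancel] at this
      rw [R.Ydef, ← hM, aF_succ]
      calc T M * P * (P * (U 0 * aF U (0 + 1) M))
          = (T M * (P * P)) * (U 0 * aF U (0 + 1) M) := by simp only [mul_assoc]
        _ = P * P * ((T 0 * U 0) * aF U (0 + 1) M) := by rw [this]; simp only [mul_assoc]
        _ = _ := by rw [R.TU 0 (by omega), one_mul]
    have e2 : Y * (T M * P) = P * P * aF U 1 M := by
      rw [R.Ydef, ← hM, aF_succ', zero_add]
      calc P * (aF U 0 M * U M) * (T M * P) = P * aF U 0 M * (U M * T M) * P := by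
            simp only [mul_assoc]
        _ = P * (aF U 0 M * P) := by rw [R.UT M hl, mul_one, mul_assoc]
        _ = _ := by
          rw [← aF_shift U P M 0 (fun k _ h => R.PU k (by omega)), mul_assoc]
    rw [e1, e2]
  have h2 : (T M * P) * Yi = Yi * (T M * P) := inv_comm_of h1 R.YYi R.YiY
  have h3 : P * Xi = T M * Xi * T M * P := by
    have a1 : X M * (T M * Xi * T M) = 1 := by
      rw [← mul_assoc, ← mul_assoc, R.XT M hl, hM, mul_assoc (U M), R.XXi, mul_one, R.UT M hl]
    have a2 : (T M * Xi * T M) * X M = 1 := by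
      rw [mul_assoc, R.TX M hl, hM, mul_assoc, ← mul_assoc Xi, R.XiX, one_mul, R.TU M hl]
    have a3 := R.PX M hl
    rw [hM] at a3
    calc P * Xi = (T M * Xi * T M) * X M * P * Xi := by rw [a2, one_mul]
      _ = (T M * Xi * T M) * (X M * P) * Xi := by simp only [mul_assoc]
      _ = (T M * Xi * T M) * P * (X N * Xi) := by rw [← a3]; simp only [mul_assoc]
      _ = _ := by rw [R.XXi, mul_one]
  rw [R.Drec M hl, hM, R.DN]
  simp only [mul_smul_comm, smul_mul_assoc]
  congr 1
  calc P * (Xi * (Y - Yi)) = (P * Xi) * (Y - Yi) := by rw [mul_assoc]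
    _ = T M * Xi * ((T M * P) * (Y - Yi)) := by rw [h3]; simp only [mul_assoc]
    _ = T M * Xi * ((Y - Yi) * (T M * P)) := by rw [mul_sub, sub_mul, h1, h2]
    _ = _ := by simp only [mul_assoc]

lemma PD (R : DRel N q κ c T U X D Xi P Pi Y Yi) (l : ℕ) : ∀ j, j + 1 + l = N → P * D (j + 1) = D j * P := by
  induction l with
  | zero => intro j hj; have := R.PDN j (by omega); rwa [← hj] at this
  | succ l ih =>
    intro j hj
    rw [R.Drec (j + 1) (by omega), ← mul_assoc, ← mul_assoc, R.PT j (by omega), mul_assoc (T j),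
      ih (j + 1) (by omega), R.Drec j (by omega), mul_assoc (T j), mul_assoc (D (j + 1)),
      R.PT j (by omega)]
    simp only [mul_assoc]

lemma Dform (R : DRel N q κ c T U X D Xi P Pi Y Yi) (l : ℕ) : ∀ i, i + l = N → D i = aF T i l * D N * dF T i l := by
  induction l with
  | zero => intro i hi; rw [aF_zero, dF_zero, ← hi]; simp
  | succ l ih =>
    intro i hi
    rw [R.Drec i (by omega), ih (i + 1) (by omega), aF_succ, dF_succ]
    simp only [mul_assoc]

lemma XaF (R : DRel N q κ c T U X D Xi P Pi Y Yi) (l : ℕ) (hl : l ≤ N) : X 0 * aF T 0 l = aF U 0 l * X l := by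
  induction l with
  | zero => simp [aF_zero]
  | succ l ih =>
    rw [aF_succ', aF_succ', ← mul_assoc, ih (by omega), zero_add, mul_assoc, R.XT l (by omega), mul_assoc]

lemma YX (R : DRel N q κ c T U X D Xi P Pi Y Yi) : Y * X N = q • (X N * (P * aF T 0 N)) := by
  rw [R.Ydef, mul_assoc, ← R.XaF N le_rfl, ← mul_assoc, R.PX0]
  simp only [smul_mul_assoc, mul_assoc]

lemma YdF (R : DRel N q κ c T U X D Xi P Pi Y Yi) : Y * dF T 0 N = P := by
  rw [R.Ydef, mul_assoc, aF_dF_inv U T N 0 (fun k _ h => R.UT k (by omega)), mul_one]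

lemma PD0 (R : DRel N q κ c T U X D Xi P Pi Y Yi) : P * D 0 = q⁻¹ • (D N * P) := by
  have h : P * aF T 0 N * Xi = q⁻¹ • (Xi * Y) := by
    have := R.YX
    calc P * aF T 0 N * Xi = (Xi * X N) * (P * aF T 0 N * Xi) := by rw [R.XiX, one_mul]
      _ = q⁻¹ • (Xi * (q • (X N * (P * aF T 0 N))) * Xi) := by
        simp only [mul_smul_comm, smul_mul_assoc, smul_smul, inv_mul_cancel₀ R.q0, one_smul, mul_assoc]
      _ = q⁻¹ • (Xi * Y * (X N * Xi)) := by rw [← this]; simp only [mul_assoc]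
      _ = _ := by rw [R.XXi, mul_one]
  rw [R.Dform N 0 (by omega), R.DN]
  simp only [mul_smul_comm, smul_mul_assoc]
  rw [smul_comm]
  congr 1
  calc P * (aF T 0 N * (Xi * (Y - Yi)) * dF T 0 N)
      = (P * aF T 0 N * Xi) * ((Y - Yi) * dF T 0 N) := by simp only [mul_assoc]
    _ = q⁻¹ • (Xi * (Y * (Y - Yi)) * dF T 0 N) := by
        rw [h]; simp only [smul_mul_assoc, mul_assoc]
    _ = q⁻¹ • (Xi * ((Y - Yi) * Y) * dF T 0 N) := by
        rw [mul_sub, sub_mul, R.YYi, R.YiY]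
    _ = q⁻¹ • (Xi * (Y - Yi) * (Y * dF T 0 N)) := by simp only [mul_assoc]
    _ = _ := by rw [R.YdF]

lemma TD1 (R : DRel N q κ c T U X D Xi P Pi Y Yi) (k : ℕ) (h : k < N) : T k * D (k + 1) = D k * U k := by
  rw [R.Drec k h, mul_assoc, R.TU k h, mul_one]

lemma TD0 (R : DRel N q κ c T U X D Xi P Pi Y Yi) (k : ℕ) (h : k < N) : T k * D k = D (k + 1) * T k - κ • D k := by
  rw [R.Drec k h, ← mul_assoc, ← mul_assoc, R.Tsq k h, sub_mul, sub_mul, one_mul]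
  simp only [smul_mul_assoc]

lemma TDhi (R : DRel N q κ c T U X D Xi P Pi Y Yi) (l : ℕ) : ∀ k j, k + 1 < j → j + l = N → T k * D j = D j * T k := by
  induction l with
  | zero => intro k j h1 h2; have := R.TDN k (by omega); rwa [← h2] at this
  | succ l ih =>
    intro k j h1 h2
    have a := R.TT k j h1 (by omega)
    rw [R.Drec j (by omega), ← mul_assoc, ← mul_assoc, a, mul_assoc (T j), ih k (j + 1) (by omega) (by omega)]
    simp only [mul_assoc]
    rw [a]

lemma P_cancel (R : DRel N q κ c T U X D Xi P Pi Y Yi) {x y : A} (h : P * x = P * y) : x = y := by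
  rw [← one_mul x, ← one_mul y, ← R.PiP, mul_assoc, mul_assoc, h]

lemma TDlo (R : DRel N q κ c T U X D Xi P Pi Y Yi) (j : ℕ) : ∀ k, j < k → k < N → T k * D j = D j * T k := by
  induction j with
  | zero =>
    intro k h1 h2
    obtain ⟨k, rfl⟩ : ∃ m, k = m + 1 := ⟨k - 1, by omega⟩
    apply R.P_cancel
    rw [← mul_assoc, R.PT k h2, mul_assoc, R.PD0, ← mul_assoc, R.PD0, mul_smul_comm, smul_mul_assoc,
      ← mul_assoc, R.TDN k h2, mul_assoc, mul_assoc, R.PT k h2]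
  | succ j ih =>
    intro k h1 h2
    obtain ⟨k, rfl⟩ : ∃ m, k = m + 1 := ⟨k - 1, by omega⟩
    have a := R.PD (N - (j + 1)) j (by omega)
    apply R.P_cancel
    rw [← mul_assoc, R.PT k h2, mul_assoc, a, ← mul_assoc, ih k (by omega) (by omega), mul_assoc,
      ← R.PT k h2, ← mul_assoc, ← mul_assoc, a]

lemma TDc (R : DRel N q κ c T U X D Xi P Pi Y Yi) (k j : ℕ) (hk : k < N) (hj : j ≤ N) (h1 : j ≠ k) (h2 : j ≠ k + 1) :
    T k * D j = D j * T k := by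
  rcases lt_or_gt_of_ne h1 with h | h
  · exact R.TDlo j k h hk
  · exact R.TDhi (N - j) k j (by omega) (by omega)

lemma XiYX (R : DRel N q κ c T U X D Xi P Pi Y Yi) : Xi * Y * X N = q • (P * aF T 0 N) := by
  rw [mul_assoc, R.YX, mul_smul_comm, ← mul_assoc, R.XiX, one_mul]

lemma XiYiX (R : DRel N q κ c T U X D Xi P Pi Y Yi) : Xi * Yi * X N = q⁻¹ • (dF U 0 N * Pi) := by
  have a : (Xi * Y * X N) * (q⁻¹ • (dF U 0 N * Pi)) = 1 := by
    rw [R.XiYX, smul_mul_smul_comm, mul_inv_cancel₀ R.q0, one_smul, mul_assoc, ← mul_assoc (aF T 0 N),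
      aF_dF_inv T U N 0 (fun k _ h => R.TU k (by omega)), one_mul, R.PPi]
  have b : (Xi * Yi * X N) * (Xi * Y * X N) = 1 := by
    calc (Xi * Yi * X N) * (Xi * Y * X N) = Xi * Yi * (X N * Xi) * Y * X N := by simp only [mul_assoc]
      _ = Xi * (Yi * Y) * X N := by rw [R.XXi, mul_one]; simp only [mul_assoc]
      _ = 1 := by rw [R.YiY, mul_one, R.XiX]
  calc Xi * Yi * X N = (Xi * Yi * X N) * ((Xi * Y * X N) * (q⁻¹ • (dF U 0 N * Pi))) := by rw [a, mul_one]
    _ = _ := by rw [← mul_assoc, b, one_mul]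

lemma DXN (R : DRel N q κ c T U X D Xi P Pi Y Yi) : D N * X N = c • (q • (P * aF T 0 N) - q⁻¹ • (dF U 0 N * Pi)) := by
  rw [← R.XiYX, ← R.XiYiX, R.DN, smul_mul_assoc, mul_sub, sub_mul]

lemma XDN (R : DRel N q κ c T U X D Xi P Pi Y Yi) : X N * D N = c • (Y - Yi) := by
  rw [R.DN, mul_smul_comm, ← mul_assoc, R.XXi, one_mul]

lemma DXM (R : DRel N q κ c T U X D Xi P Pi Y Yi) (M : ℕ) (hM : M + 1 = N) : D N * X M = X M * D N +
    (c * κ) • (q • (P * aF T 0 M) + dF U 0 N * Pi * (P * aF T 0 M) * Yi) := by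
  have hl : M < N := by omega
  have h1 : Y * X M = X M * Y + (κ * q) • (X N * (P * aF T 0 M)) := by
    have e1 : U M * X M = X N * U M + κ • X M := by
      rw [← hM, ← R.TX M hl, R.Udef, add_mul]; simp
    have e2 : aF U 0 M * X N = X N * aF U 0 M :=
      (aF_comm U (X N) M 0 (fun k _ h => R.comm_U k _
        (R.TXc k N (by omega) le_rfl (by omega) (by omega)).symm)).symm
    have e3 := R.PX M hl
    rw [hM] at e3
    calc Y * X M = P * aF U 0 M * (U M * X M) := by
          rw [R.Ydef, ← hM, aF_succ', zero_add]; simp only [mul_assoc]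
      _ = P * (aF U 0 M * X N) * U M + κ • (P * (aF U 0 M * X M)) := by
          rw [e1, mul_add, mul_smul_comm]; simp only [mul_assoc]
      _ = (P * X N) * (aF U 0 M * U M) + κ • ((P * X 0) * aF T 0 M) := by
          rw [e2, ← R.XaF M (by omega)]; simp only [mul_assoc]
      _ = X M * (P * (aF U 0 M * U M)) + κ • (q • (X N * (P * aF T 0 M))) := by
          rw [e3, R.PX0]; simp only [mul_assoc, smul_mul_assoc]
      _ = _ := by
          rw [smul_smul]; congr 2; rw [R.Ydef, ← hM, aF_succ', zero_add]
  have h2 : Yi * X M = X M * Yi - (κ * q) • (Yi * X N * (P * aF T 0 M) * Yi) := by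
    have : Yi * (Y * X M) * Yi = X M * Yi := by rw [← mul_assoc, R.YiY, one_mul]
    rw [← this, h1, mul_add, add_mul, ← mul_assoc, mul_assoc (Yi * X M), R.YYi, mul_one]
    simp only [mul_smul_comm, smul_mul_assoc, mul_assoc, add_sub_cancel_right]
  have h3 : X M * Xi = Xi * X M := inv_comm_of (R.XX M N (by omega) le_rfl) R.XXi R.XiX
  have h4 : Xi * (Yi * X N * (P * aF T 0 M) * Yi) = q⁻¹ • (dF U 0 N * Pi * (P * aF T 0 M) * Yi) := by
    have := R.XiYiX
    calc _ = (Xi * Yi * X N) * ((P * aF T 0 M) * Yi) := by simp only [mul_assoc]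
      _ = _ := by rw [this]; simp only [mul_assoc, smul_mul_assoc]
  have h5 : Xi * (X N * (P * aF T 0 M)) = P * aF T 0 M := by rw [← mul_assoc, R.XiX, one_mul]
  rw [R.DN, smul_mul_assoc, mul_smul_comm, mul_smul, ← smul_add]
  congr 1
  rw [mul_assoc, sub_mul, h1, h2]
  have e : X M * Yi - (κ * q) • (Yi * X N * (P * aF T 0 M) * Yi) = X M * Yi + (-(κ * q)) • (Yi * X N * (P * aF T 0 M) * Yi) := by
    rw [neg_smul, sub_eq_add_neg]
  rw [e, mul_sub, mul_add, mul_add, mul_smul_comm, mul_smul_comm, h4, h5, ← mul_assoc Xi, ← mul_assoc Xi, ← h3,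
    smul_smul, smul_add, smul_smul, neg_mul, mul_assoc κ q, mul_inv_cancel₀ R.q0, mul_one, neg_smul, mul_sub, mul_sub]
  simp only [mul_assoc]
  abel

end DRel
end AbstractRel

section AbstractAlg
variable {F A : Type*} [Field F] [Ring A] [Algebra F A]

lemma gen_left (S : Set A) (M : Submodule F A) (h1 : 1 ∈ M) (h : ∀ s ∈ S, ∀ x ∈ M, s * x ∈ M)
    {x : A} (hx : x ∈ Algebra.adjoin F S) : x ∈ M := by
  have key : ∀ y ∈ M, x * y ∈ M := by
    induction hx using Algebra.adjoin_induction with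
    | mem s hs => exact h s hs
    | algebraMap r => intro y hy; rw [← Algebra.smul_def]; exact M.smul_mem r hy
    | add a b _ _ ha hb => intro y hy; rw [add_mul]; exact M.add_mem (ha y hy) (hb y hy)
    | mul a b _ _ ha hb => intro y hy; rw [mul_assoc]; exact ha _ (hb y hy)
  simpa using key 1 h1

lemma adjoin_mul_le (S : Set A) (V : Submodule F A)
    (h : ∀ s ∈ S, ∀ v ∈ V, s * v ∈ V * Subalgebra.toSubmodule (Algebra.adjoin F S)) :
    Subalgebra.toSubmodule (Algebra.adjoin F S) * V ≤
      V * Subalgebra.toSubmodule (Algebra.adjoin F S) := by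
  set E := Subalgebra.toSubmodule (Algebra.adjoin F S) with hE
  have hEE : E * E = E := Subalgebra.isIdempotentElem_toSubmodule _
  rw [Submodule.mul_le]
  intro x hx v hv
  have hx' : x ∈ Algebra.adjoin F S := hx
  clear hx
  induction hx' using Algebra.adjoin_induction generalizing v with
  | mem s hs => exact h s hs v hv
  | algebraMap r =>
    rw [Algebra.commutes]
    exact Submodule.mul_mem_mul hv (Subalgebra.algebraMap_mem _ r)
  | add a b _ _ ha hb => rw [add_mul]; exact Submodule.add_mem _ (ha v hv) (hb v hv)
  | mul a b _ _ ha hb =>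
    rw [mul_assoc]
    have h1 := hb v hv
    have : ∀ y ∈ V * E, a * y ∈ V * E := by
      intro y hy
      induction hy using Submodule.mul_induction_on' with
      | mem_mul_mem m hm e he =>
        rw [← mul_assoc]
        have := Submodule.mul_mem_mul (ha m hm) he
        rwa [mul_assoc V, hEE] at this
      | add x _ y _ hx hy => rw [mul_add]; exact Submodule.add_mem _ hx hy
    exact this _ h1

lemma pow_comm_le {E V : Submodule F A} (h : E * V ≤ V * E) (d : ℕ) :
    E * V ^ d ≤ V ^ d * E := by
  induction d with
  | zero => simp
  | succ d ih =>
    calc E * V ^ (d + 1) = (E * V ^ d) * V := by rw [pow_succ, mul_assoc]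
      _ ≤ V ^ d * E * V := mul_le_mul_left ih _
      _ = V ^ d * (E * V) := mul_assoc _ _ _
      _ ≤ V ^ d * (V * E) := mul_le_mul_right h _
      _ = _ := by rw [pow_succ, mul_assoc]

/-- The graded decomposition of the big algebra. -/
lemma big_le (E : Subalgebra F A) (VX VD : Submodule F A)
    (hX : Subalgebra.toSubmodule E * VX ≤ VX * Subalgebra.toSubmodule E)
    (hD : Subalgebra.toSubmodule E * VD ≤ VD * Subalgebra.toSubmodule E)
    (hXD : VX * VD ≤ Subalgebra.toSubmodule E) (hDX : VD * VX ≤ Subalgebra.toSubmodule E)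
    (S : Set A) (hS : ∀ s ∈ S, s ∈ E ∨ s ∈ VX ∨ s ∈ VD) {x : A} (hx : x ∈ Algebra.adjoin F S) :
    x ∈ (⨆ d : ℕ, VX ^ d * Subalgebra.toSubmodule E) ⊔ (⨆ d : ℕ, VD ^ d * Subalgebra.toSubmodule E) := by
  set E' := Subalgebra.toSubmodule E with hE
  have hEE : E' * E' = E' := Subalgebra.isIdempotentElem_toSubmodule _
  set M := (⨆ d : ℕ, VX ^ d * E') ⊔ (⨆ d : ℕ, VD ^ d * E') with hM
  have hXM : ∀ d, VX ^ d * E' ≤ M := fun d => le_sup_of_le_left (le_iSup (fun d => VX ^ d * E') d)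
  have hDM : ∀ d, VD ^ d * E' ≤ M := fun d => le_sup_of_le_right (le_iSup (fun d => VD ^ d * E') d)
  have gen : ∀ V : Submodule F A, (∀ d, V * (VX ^ d * E') ≤ M) → (∀ d, V * (VD ^ d * E') ≤ M) →
      V * M ≤ M := by
    intro V h1 h2
    rw [hM, Submodule.mul_sup, Submodule.mul_iSup, Submodule.mul_iSup, ← hM]
    exact sup_le (iSup_le h1) (iSup_le h2)
  have hE1 : ∀ V : Submodule F A, E' * V ≤ V * E' → ∀ d, E' * (V ^ d * E') ≤ V ^ d * E' := by
    intro V hV d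
    calc E' * (V ^ d * E') = (E' * V ^ d) * E' := (mul_assoc _ _ _).symm
      _ ≤ V ^ d * E' * E' := mul_le_mul_left (pow_comm_le hV d) _
      _ = _ := by rw [mul_assoc, hEE]
  have gE : E' * M ≤ M := gen E' (fun d => (hE1 VX hX d).trans (hXM d)) (fun d => (hE1 VD hD d).trans (hDM d))
  have gen2 : ∀ V V' : Submodule F A, V * V' ≤ E' → E' * V' ≤ V' * E' → V * E' ≤ M → (∀ d, V' ^ d * E' ≤ M) →
      ∀ d, V * (V' ^ d * E') ≤ M := by
    intro V V' h1 h2 h3 h4 d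
    cases d with
    | zero => simpa using h3
    | succ d =>
      calc V * (V' ^ (d + 1) * E') = (V * V') * (V' ^ d * E') := by
            rw [pow_succ']; simp only [mul_assoc]
        _ ≤ E' * (V' ^ d * E') := mul_le_mul_left h1 _
        _ ≤ V' ^ d * E' := hE1 V' h2 d
        _ ≤ M := h4 d
  have gen3 : ∀ V : Submodule F A, (∀ d, V ^ d * E' ≤ M) → ∀ d, V * (V ^ d * E') ≤ M := by
    intro V h d
    rw [← mul_assoc, ← pow_succ']
    exact h (d + 1)
  have gX : VX * M ≤ M := gen VX (gen3 VX hXM) (gen2 VX VD hXD hD (by simpa using hXM 1) hDM)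
  have gD : VD * M ≤ M := gen VD (gen2 VD VX hDX hX (by simpa using hDM 1) hXM) (gen3 VD hDM)
  refine gen_left S M ?_ ?_ hx
  · have := hXM 0
    rw [pow_zero, one_mul] at this
    exact this (one_mem E)
  · intro s hs y hy
    rcases hS s hs with h | h | h
    · exact gE (Submodule.mul_mem_mul h hy)
    · exact gX (Submodule.mul_mem_mul h hy)
    · exact gD (Submodule.mul_mem_mul h hy)
end AbstractAlg

section AbstractRel2
variable {F A : Type*} [Field F] [Ring A] [Algebra F A]

lemma aF_mem (E : Subalgebra F A) (f : ℕ → A) (l : ℕ) :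
    ∀ s, (∀ k, s ≤ k → k < s + l → f k ∈ E) → aF f s l ∈ E := by
  induction l with
  | zero => intro s _; rw [aF_zero]; exact one_mem E
  | succ l ih =>
    intro s h
    rw [aF_succ]
    exact mul_mem (h s le_rfl (by omega)) (ih (s + 1) (fun k h1 h2 => h k (by omega) (by omega)))

lemma dF_mem (E : Subalgebra F A) (f : ℕ → A) (l : ℕ) :
    ∀ s, (∀ k, s ≤ k → k < s + l → f k ∈ E) → dF f s l ∈ E := by
  induction l with
  | zero => intro s _; rw [dF_zero]; exact one_mem E
  | succ l ih =>
    intro s h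
    rw [dF_succ]
    exact mul_mem (ih (s + 1) (fun k h1 h2 => h k (by omega) (by omega))) (h s le_rfl (by omega))

/-- Generators of the affine Hecke subalgebra. -/
def HSet (N : ℕ) (T : ℕ → A) (P Pi : A) : Set A := {f | (∃ k, k < N ∧ f = T k) ∨ f = P ∨ f = Pi}

/-- Generators of the degree zero subalgebra. -/
def ESet (N : ℕ) (T X D : ℕ → A) (P Pi : A) : Set A :=
  {f | f ∈ HSet N T P Pi ∨ ∃ i j, i ≤ N ∧ j ≤ N ∧ f = X i * D j}

/-- The span of `V 0, …, V N`. -/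
def Vs (F : Type*) {A : Type*} [Field F] [Ring A] [Algebra F A] (N : ℕ) (V : ℕ → A) : Submodule F A :=
  Submodule.span F {f | ∃ j, j ≤ N ∧ f = V j}

lemma Vs_mem {N : ℕ} (V : ℕ → A) {j : ℕ} (hj : j ≤ N) : V j ∈ Vs F N V :=
  Submodule.subset_span ⟨j, hj, rfl⟩

lemma Vs_le {N : ℕ} {V : ℕ → A} {M : Submodule F A} (h : ∀ j, j ≤ N → V j ∈ M) : Vs F N V ≤ M := by
  apply Submodule.span_le.2
  rintro _ ⟨j, hj, rfl⟩
  exact h j hj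

lemma Vs_mul_le {N : ℕ} {V V' : ℕ → A} {M : Submodule F A}
    (h : ∀ i j, i ≤ N → j ≤ N → V i * V' j ∈ M) : Vs F N V * Vs F N V' ≤ M := by
  rw [Vs, Vs, Submodule.span_mul_span]
  apply Submodule.span_le.2
  rintro _ ⟨_, ⟨i, hi, rfl⟩, _, ⟨j, hj, rfl⟩, rfl⟩
  exact h i j hi hj

lemma Vs_left {N : ℕ} {V : ℕ → A} {M : Submodule F A} (s : A) (h : ∀ j, j ≤ N → s * V j ∈ M) :
    ∀ v ∈ Vs F N V, s * v ∈ M := by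
  have : Vs F N V ≤ M.comap (LinearMap.mulLeft F s) := Vs_le (by simpa using h)
  intro v hv
  simpa using this hv

lemma sub_smul_mem {M : Submodule F A} {x y : A} (κ : F) (hx : x ∈ M) (hy : y ∈ M) : x - κ • y ∈ M :=
  M.sub_mem hx (M.smul_mem κ hy)

namespace DRel
variable {N : ℕ} {q κ c : F} {T U X D : ℕ → A} {Xi P Pi Y Yi : A}

lemma T_mem (k : ℕ) (hk : k < N) : T k ∈ Algebra.adjoin F (HSet N T P Pi) :=
  Algebra.subset_adjoin (Or.inl ⟨k, hk, rfl⟩)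
lemma P_mem : P ∈ Algebra.adjoin F (HSet N T P Pi) := Algebra.subset_adjoin (Or.inr (Or.inl rfl))
lemma Pi_mem : Pi ∈ Algebra.adjoin F (HSet N T P Pi) := Algebra.subset_adjoin (Or.inr (Or.inr rfl))

lemma U_mem (R : DRel N q κ c T U X D Xi P Pi Y Yi) (k : ℕ) (hk : k < N) : U k ∈ Algebra.adjoin F (HSet N T P Pi) := by
  rw [R.Udef]
  exact add_mem (T_mem k hk) (Subalgebra.smul_mem _ (one_mem _) _)

lemma Y_mem (R : DRel N q κ c T U X D Xi P Pi Y Yi) : Y ∈ Algebra.adjoin F (HSet N T P Pi) := by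
  rw [R.Ydef]
  exact mul_mem P_mem (aF_mem _ _ _ _ (fun k _ h => R.U_mem k (by omega)))

lemma Yi_eq (R : DRel N q κ c T U X D Xi P Pi Y Yi) : Yi = dF T 0 N * Pi := by
  have : Y * (dF T 0 N * Pi) = 1 := by rw [← mul_assoc, R.YdF, R.PPi]
  rw [← one_mul (dF T 0 N * Pi), ← R.YiY, mul_assoc, this, mul_one]

lemma Yi_mem (R : DRel N q κ c T U X D Xi P Pi Y Yi) : Yi ∈ Algebra.adjoin F (HSet N T P Pi) := by
  rw [R.Yi_eq]
  exact mul_mem (dF_mem _ _ _ _ (fun k _ h => T_mem k (by omega))) Pi_mem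

lemma HVX (R : DRel N q κ c T U X D Xi P Pi Y Yi) : Subalgebra.toSubmodule (Algebra.adjoin F (HSet N T P Pi)) * Vs F N X ≤
    Vs F N X * Subalgebra.toSubmodule (Algebra.adjoin F (HSet N T P Pi)) := by
  have hm : ∀ j, j ≤ N → ∀ h ∈ Algebra.adjoin F (HSet N T P Pi), X j * h ∈
      Vs F N X * Subalgebra.toSubmodule (Algebra.adjoin F (HSet N T P Pi)) :=
    fun j hj h hh => Submodule.mul_mem_mul (Vs_mem X hj) hh
  have hm1 : ∀ j, j ≤ N → X j ∈
      Vs F N X * Subalgebra.toSubmodule (Algebra.adjoin F (HSet N T P Pi)) :=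
    fun j hj => by simpa using hm j hj 1 (one_mem _)
  apply adjoin_mul_le
  intro s hs
  apply Vs_left
  intro j hj
  rcases hs with ⟨k, hk, rfl⟩ | rfl | rfl
  · by_cases h1 : j = k
    · subst h1; rw [R.TX j hk]; exact hm _ (by omega) _ (R.U_mem j hk)
    · by_cases h2 : j = k + 1
      · subst h2; rw [R.TX1 k hk]
        exact sub_smul_mem _ (hm _ (by omega) _ (T_mem k hk)) (hm1 _ hj)
      · rw [R.TXc k j hk hj h1 h2]; exact hm _ hj _ (T_mem k hk)
  · cases j with
    | zero => rw [R.PX0]; exact Submodule.smul_mem _ _ (hm _ le_rfl _ P_mem)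
    | succ j => rw [R.PX j hj]; exact hm _ (by omega) _ P_mem
  · rcases hj.lt_or_eq with h | rfl
    · rw [conj_of (R.PX j h).symm R.PPi R.PiP]; exact hm _ (by omega) _ Pi_mem
    · have : X j * P = P * (q⁻¹ • X 0) := by
        rw [mul_smul_comm, R.PX0, smul_smul, inv_mul_cancel₀ R.q0, one_smul]
      rw [conj_of this R.PPi R.PiP, smul_mul_assoc]
      exact Submodule.smul_mem _ _ (hm _ (by omega) _ Pi_mem)

lemma HVD (R : DRel N q κ c T U X D Xi P Pi Y Yi) : Subalgebra.toSubmodule (Algebra.adjoin F (HSet N T P Pi)) * Vs F N D ≤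
    Vs F N D * Subalgebra.toSubmodule (Algebra.adjoin F (HSet N T P Pi)) := by
  have hm : ∀ j, j ≤ N → ∀ h ∈ Algebra.adjoin F (HSet N T P Pi), D j * h ∈
      Vs F N D * Subalgebra.toSubmodule (Algebra.adjoin F (HSet N T P Pi)) :=
    fun j hj h hh => Submodule.mul_mem_mul (Vs_mem D hj) hh
  have hm1 : ∀ j, j ≤ N → D j ∈
      Vs F N D * Subalgebra.toSubmodule (Algebra.adjoin F (HSet N T P Pi)) :=
    fun j hj => by simpa using hm j hj 1 (one_mem _)
  apply adjoin_mul_le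
  intro s hs
  apply Vs_left
  intro j hj
  rcases hs with ⟨k, hk, rfl⟩ | rfl | rfl
  · by_cases h1 : j = k
    · subst h1; rw [R.TD0 j hk]
      exact sub_smul_mem _ (hm _ (by omega) _ (T_mem j hk)) (hm1 _ hj)
    · by_cases h2 : j = k + 1
      · subst h2; rw [R.TD1 k hk]; exact hm _ (by omega) _ (R.U_mem k hk)
      · rw [R.TDc k j hk hj h1 h2]; exact hm _ hj _ (T_mem k hk)
  · cases j with
    | zero => rw [R.PD0]; exact Submodule.smul_mem _ _ (hm _ le_rfl _ P_mem)
    | succ j => rw [R.PD (N - (j + 1)) j (by omega)]; exact hm _ (by omega) _ P_mem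
  · rcases hj.lt_or_eq with h | rfl
    · rw [conj_of (R.PD (N - (j + 1)) j (by omega)).symm R.PPi R.PiP]; exact hm _ (by omega) _ Pi_mem
    · have : D j * P = P * (q • D 0) := by
        rw [mul_smul_comm, R.PD0, smul_smul, mul_inv_cancel₀ R.q0, one_smul]
      rw [conj_of this R.PPi R.PiP, smul_mul_assoc]
      exact Submodule.smul_mem _ _ (hm _ (by omega) _ Pi_mem)

lemma XD_mem (R : DRel N q κ c T U X D Xi P Pi Y Yi) (M : Submodule F A)
    (hl : ∀ h ∈ Algebra.adjoin F (HSet N T P Pi), ∀ m ∈ M, h * m ∈ M)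
    (hr : ∀ h ∈ Algebra.adjoin F (HSet N T P Pi), ∀ m ∈ M, m * h ∈ M)
    (h0 : X N * D N ∈ M) (h1 : ∀ m, m + 1 = N → X m * D N ∈ M) (i j : ℕ) (hi : i ≤ N) (hj : j ≤ N) :
    X i * D j ∈ M := by
  have s1 : ∀ l i, i + l = N → X i * D N ∈ M := by
    intro l
    induction l with
    | zero => intro i hi; obtain rfl : i = N := by omega
              exact h0
    | succ l ih =>
      intro i hi
      by_cases h : i + 1 = N
      · exact h1 i h
      · have a : D N * U i = U i * D N := R.comm_U i _ (R.TDN i (by omega)).symm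
        have : X i * D N = U i * (X (i + 1) * D N) * U i := by
          rw [R.Xdown i (by omega)]; simp only [mul_assoc]; rw [a]
        rw [this]
        exact hr _ (R.U_mem i (by omega)) _ (hl _ (R.U_mem i (by omega)) _ (ih _ (by omega)))
  have s2 : ∀ l j, j + l = N → ∀ i, i ≤ N → X i * D j ∈ M := by
    intro l
    induction l with
    | zero => intro j hj i hi; obtain rfl : j = N := by omega
              exact s1 (j - i) i (by omega)
    | succ l ih =>
      intro j hj i hi
      have hT : T j ∈ Algebra.adjoin F (HSet N T P Pi) := T_mem j (by omega)
      rw [R.Drec j (by omega), ← mul_assoc]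
      apply hr _ hT
      rw [← mul_assoc]
      by_cases a1 : i = j
      · subst a1
        rw [R.XT i (by omega), mul_assoc]
        exact hl _ (R.U_mem i (by omega)) _ (ih _ (by omega) _ (by omega))
      · by_cases a2 : i = j + 1
        · subst a2
          rw [R.TX0 j (by omega), sub_mul, mul_assoc, smul_mul_assoc]
          exact sub_smul_mem _ (hl _ hT _ (ih _ (by omega) _ (by omega))) (ih _ (by omega) _ (by omega))
        · rw [← R.TXc j i (by omega) hi a1 a2, mul_assoc]
          exact hl _ hT _ (ih _ (by omega) _ (by omega))
  exact s2 (N - j) j (by omega) i hi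

lemma DX_mem (R : DRel N q κ c T U X D Xi P Pi Y Yi) (M : Submodule F A)
    (hl : ∀ h ∈ Algebra.adjoin F (HSet N T P Pi), ∀ m ∈ M, h * m ∈ M)
    (hr : ∀ h ∈ Algebra.adjoin F (HSet N T P Pi), ∀ m ∈ M, m * h ∈ M)
    (h0 : D N * X N ∈ M) (h1 : ∀ m, m + 1 = N → D N * X m ∈ M) (i j : ℕ) (hi : i ≤ N) (hj : j ≤ N) :
    D j * X i ∈ M := by
  have s1 : ∀ l i, i + l = N → D N * X i ∈ M := by
    intro l
    induction l with
    | zero => intro i hi; obtain rfl : i = N := by omega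
              exact h0
    | succ l ih =>
      intro i hi
      by_cases h : i + 1 = N
      · exact h1 i h
      · have a : D N * U i = U i * D N := R.comm_U i _ (R.TDN i (by omega)).symm
        have : D N * X i = U i * (D N * X (i + 1)) * U i := by
          rw [R.Xdown i (by omega), ← mul_assoc, ← mul_assoc, a]; simp only [mul_assoc]
        rw [this]
        exact hr _ (R.U_mem i (by omega)) _ (hl _ (R.U_mem i (by omega)) _ (ih _ (by omega)))
  have s2 : ∀ l j, j + l = N → ∀ i, i ≤ N → D j * X i ∈ M := by
    intro l
    induction l with
    | zero => intro j hj i hi; obtain rfl : j = N := by omega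
              exact s1 (j - i) i (by omega)
    | succ l ih =>
      intro j hj i hi
      have hT : T j ∈ Algebra.adjoin F (HSet N T P Pi) := T_mem j (by omega)
      rw [R.Drec j (by omega), mul_assoc, mul_assoc]
      apply hl _ hT
      by_cases a1 : i = j
      · subst a1
        rw [R.TX i (by omega), ← mul_assoc]
        exact hr _ (R.U_mem i (by omega)) _ (ih _ (by omega) _ (by omega))
      · by_cases a2 : i = j + 1
        · subst a2
          rw [R.TX1 j (by omega), mul_sub, ← mul_assoc, mul_smul_comm]
          exact sub_smul_mem _ (hr _ hT _ (ih _ (by omega) _ (by omega))) (ih _ (by omega) _ (by omega))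
        · rw [R.TXc j i (by omega) hi a1 a2, ← mul_assoc]
          exact hr _ hT _ (ih _ (by omega) _ (by omega))
  exact s2 (N - j) j (by omega) i hi

lemma H_le : Algebra.adjoin F (HSet N T P Pi) ≤ Algebra.adjoin F (ESet N T X D P Pi) :=
  Algebra.adjoin_mono (fun _ h => Or.inl h)

lemma XD_memE (i j : ℕ) (hi : i ≤ N) (hj : j ≤ N) : X i * D j ∈ Algebra.adjoin F (ESet N T X D P Pi) :=
  Algebra.subset_adjoin (Or.inr ⟨i, j, hi, hj, rfl⟩)

lemma DXN_memH (R : DRel N q κ c T U X D Xi P Pi Y Yi) : D N * X N ∈ Algebra.adjoin F (HSet N T P Pi) := by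
  rw [R.DXN]
  have h1 : aF T 0 N ∈ Algebra.adjoin F (HSet N T P Pi) :=
    aF_mem _ _ _ _ (fun k _ h => T_mem k (by omega))
  have h2 : dF U 0 N ∈ Algebra.adjoin F (HSet N T P Pi) :=
    dF_mem _ _ _ _ (fun k _ h => R.U_mem k (by omega))
  exact Subalgebra.smul_mem _ (sub_mem (Subalgebra.smul_mem _ (mul_mem P_mem h1) _)
    (Subalgebra.smul_mem _ (mul_mem h2 Pi_mem) _)) _

lemma XDN_memH (R : DRel N q κ c T U X D Xi P Pi Y Yi) : X N * D N ∈ Algebra.adjoin F (HSet N T P Pi) := by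
  rw [R.XDN]
  exact Subalgebra.smul_mem _ (sub_mem R.Y_mem R.Yi_mem) _

lemma DXM_memH (R : DRel N q κ c T U X D Xi P Pi Y Yi) (M : ℕ) (hM : M + 1 = N) :
    ∃ h ∈ Algebra.adjoin F (HSet N T P Pi), D N * X M = X M * D N + h := by
  refine ⟨_, ?_, R.DXM M hM⟩
  have h1 : P * aF T 0 M ∈ Algebra.adjoin F (HSet N T P Pi) :=
    mul_mem P_mem (aF_mem _ _ _ _ (fun k _ h => T_mem k (by omega)))
  have h2 : dF U 0 N ∈ Algebra.adjoin F (HSet N T P Pi) :=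
    dF_mem _ _ _ _ (fun k _ h => R.U_mem k (by omega))
  exact Subalgebra.smul_mem _ (add_mem (Subalgebra.smul_mem _ h1 _)
    (mul_mem (mul_mem (mul_mem h2 Pi_mem) h1) R.Yi_mem)) _

lemma DX_memE (R : DRel N q κ c T U X D Xi P Pi Y Yi) (i j : ℕ) (hi : i ≤ N) (hj : j ≤ N) :
    D j * X i ∈ Algebra.adjoin F (ESet N T X D P Pi) := by
  refine R.DX_mem (Subalgebra.toSubmodule (Algebra.adjoin F (ESet N T X D P Pi))) ?_ ?_ ?_ ?_ i j hi hj
  · intro h hh m hm; exact Subalgebra.mul_mem _ (H_le hh) hm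
  · intro h hh m hm; exact Subalgebra.mul_mem _ hm (H_le hh)
  · exact H_le R.DXN_memH
  · intro m hm
    obtain ⟨h, hh, e⟩ := R.DXM_memH m hm
    rw [e]
    exact add_mem (XD_memE m N (by omega) le_rfl) (H_le hh)

lemma EVX (R : DRel N q κ c T U X D Xi P Pi Y Yi) : Subalgebra.toSubmodule (Algebra.adjoin F (ESet N T X D P Pi)) * Vs F N X ≤
    Vs F N X * Subalgebra.toSubmodule (Algebra.adjoin F (ESet N T X D P Pi)) := by
  apply adjoin_mul_le
  rintro s (hs | ⟨i, j, hi, hj, rfl⟩) v hv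
  · have h1 := R.HVX (Submodule.mul_mem_mul (Algebra.subset_adjoin hs) hv)
    exact mul_le_mul_right (a := Vs F N X) (show Subalgebra.toSubmodule _ ≤ Subalgebra.toSubmodule _ from H_le) h1
  · revert v
    apply Vs_left
    intro k hk
    rw [mul_assoc]
    exact Submodule.mul_mem_mul (Vs_mem X hi) (R.DX_memE k j hk hj)

lemma XD_memM (R : DRel N q κ c T U X D Xi P Pi Y Yi) (i j : ℕ) (hi : i ≤ N) (hj : j ≤ N) :
    X i * D j ∈ Vs F N D * Vs F N X * Subalgebra.toSubmodule (Algebra.adjoin F (HSet N T P Pi)) ⊔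
      Subalgebra.toSubmodule (Algebra.adjoin F (HSet N T P Pi)) := by
  set H := Subalgebra.toSubmodule (Algebra.adjoin F (HSet N T P Pi)) with hH
  have hHH : H * H = H := Subalgebra.isIdempotentElem_toSubmodule _
  have hL : H * (Vs F N D * Vs F N X * H) ≤ Vs F N D * Vs F N X * H := by
    calc H * (Vs F N D * Vs F N X * H) = (H * Vs F N D) * (Vs F N X * H) := by simp only [mul_assoc]
      _ ≤ (Vs F N D * H) * (Vs F N X * H) := mul_le_mul_left R.HVD _
      _ = Vs F N D * ((H * Vs F N X) * H) := by simp only [mul_assoc]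
      _ ≤ Vs F N D * ((Vs F N X * H) * H) := mul_le_mul_right (mul_le_mul_left R.HVX _) _
      _ = _ := by rw [mul_assoc _ H H, hHH, mul_assoc]
  have hl : H * (Vs F N D * Vs F N X * H ⊔ H) ≤ Vs F N D * Vs F N X * H ⊔ H := by
    rw [Submodule.mul_sup, hHH]
    exact sup_le_sup hL le_rfl
  have hr : (Vs F N D * Vs F N X * H ⊔ H) * H ≤ Vs F N D * Vs F N X * H ⊔ H := by
    rw [Submodule.sup_mul, hHH, mul_assoc _ H H, hHH]
  refine R.XD_mem _ ?_ ?_ ?_ ?_ i j hi hj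
  · intro h hh m hm; exact hl (Submodule.mul_mem_mul hh hm)
  · intro h hh m hm; exact hr (Submodule.mul_mem_mul hm hh)
  · exact Submodule.mem_sup_right R.XDN_memH
  · intro m hm
    obtain ⟨h, hh, e⟩ := R.DXM_memH m hm
    rw [← sub_eq_iff_eq_add] at e
    rw [← e]
    refine Submodule.sub_mem _ (Submodule.mem_sup_left ?_) (Submodule.mem_sup_right hh)
    have := Submodule.mul_mem_mul (Submodule.mul_mem_mul (Vs_mem (F := F) D (le_refl N))
      (Vs_mem (F := F) X (by omega : m ≤ N))) (show (1 : A) ∈ H from one_mem (Algebra.adjoin F (HSet N T P Pi)))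
    rw [mul_one] at this
    exact this

lemma XVD_le (R : DRel N q κ c T U X D Xi P Pi Y Yi) : Vs F N X * Vs F N D ≤ Subalgebra.toSubmodule (Algebra.adjoin F (ESet N T X D P Pi)) :=
  Vs_mul_le (fun i j hi hj => XD_memE i j hi hj)

lemma DVX_le (R : DRel N q κ c T U X D Xi P Pi Y Yi) : Vs F N D * Vs F N X ≤ Subalgebra.toSubmodule (Algebra.adjoin F (ESet N T X D P Pi)) :=
  Vs_mul_le (fun i j hi hj => R.DX_memE j i hj hi)

lemma EVD (R : DRel N q κ c T U X D Xi P Pi Y Yi) : Subalgebra.toSubmodule (Algebra.adjoin F (ESet N T X D P Pi)) * Vs F N D ≤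
    Vs F N D * Subalgebra.toSubmodule (Algebra.adjoin F (ESet N T X D P Pi)) := by
  apply adjoin_mul_le
  set H := Subalgebra.toSubmodule (Algebra.adjoin F (HSet N T P Pi)) with hH
  set E := Subalgebra.toSubmodule (Algebra.adjoin F (ESet N T X D P Pi)) with hE
  have hEE : E * E = E := Subalgebra.isIdempotentElem_toSubmodule _
  have hHE : H ≤ E := H_le
  have h0 : H * Vs F N D ≤ Vs F N D * E := R.HVD.trans (mul_le_mul_right hHE _)
  rintro s (hs | ⟨i, j, hi, hj, rfl⟩) v hv
  · exact h0 (Submodule.mul_mem_mul (Algebra.subset_adjoin hs) hv)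
  · have h1 := Submodule.mul_mem_mul (R.XD_memM i j hi hj) hv
    revert h1
    apply SetLike.le_def.1
    rw [Submodule.sup_mul]
    refine sup_le ?_ h0
    calc Vs F N D * Vs F N X * H * Vs F N D = Vs F N D * (Vs F N X * (H * Vs F N D)) := by
          simp only [mul_assoc]
      _ ≤ Vs F N D * (Vs F N X * (Vs F N D * H)) := mul_le_mul_right (mul_le_mul_right R.HVD _) _
      _ = Vs F N D * ((Vs F N X * Vs F N D) * H) := by simp only [mul_assoc]
      _ ≤ Vs F N D * (E * E) := mul_le_mul_right (mul_le_mul' R.XVD_le hHE) _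
      _ = _ := by rw [hEE]

lemma big (R : DRel N q κ c T U X D Xi P Pi Y Yi) (S : Set A) (hS : ∀ s ∈ S, s ∈ Algebra.adjoin F (ESet N T X D P Pi) ∨ s ∈ Vs F N X ∨ s ∈ Vs F N D)
    {x : A} (hx : x ∈ Algebra.adjoin F S) :
    x ∈ (⨆ d : ℕ, Vs F N X ^ d * Subalgebra.toSubmodule (Algebra.adjoin F (ESet N T X D P Pi))) ⊔
      (⨆ d : ℕ, Vs F N D ^ d * Subalgebra.toSubmodule (Algebra.adjoin F (ESet N T X D P Pi))) :=
  big_le _ _ _ R.EVX R.EVD R.XVD_le R.DVX_le S hS hx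

end DRel
end AbstractRel2

section Centr
variable {F A : Type*} [Field F] [Ring A] [Algebra F A]

lemma mem_eig {y yi : A} (h1 : y * yi = 1) (h2 : yi * y = 1) (μ : F) (x : A) :
    x ∈ Module.End.eigenspace (LinearMap.mulLeft F y * LinearMap.mulRight F yi) μ ↔
      y * x = μ • (x * y) := by
  rw [Module.End.mem_eigenspace_iff]
  simp only [Module.End.mul_apply, LinearMap.mulLeft_apply, LinearMap.mulRight_apply]
  constructor
  · intro h
    rw [← smul_mul_assoc, ← h, mul_assoc, mul_assoc, h2, mul_one]
  · intro h
    rw [← mul_assoc, h, smul_mul_assoc, mul_assoc, h1, mul_one]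

lemma centr_mem {y yi : A} (h1 : y * yi = 1) (h2 : yi * y = 1) (q : F) (q0 : q ≠ 0)
    (hq : ∀ m : ℕ, m ≠ 0 → q ^ m ≠ 1) (E : Subalgebra F A) (VX VD : Submodule F A)
    (hE : ∀ x ∈ E, y * x = x * y) (hX : ∀ x ∈ VX, y * x = q • (x * y))
    (hD : ∀ x ∈ VD, y * x = q⁻¹ • (x * y)) {f : A} (hf : f * y = y * f)
    (hm : f ∈ (⨆ d : ℕ, VX ^ d * Subalgebra.toSubmodule E) ⊔
      (⨆ d : ℕ, VD ^ d * Subalgebra.toSubmodule E)) : f ∈ E := by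
  set Ω : Module.End F A := LinearMap.mulLeft F y * LinearMap.mulRight F yi with hΩ
  set Q := ⨆ μ : F, ⨆ (_ : μ ≠ 1), Module.End.eigenspace Ω μ with hQ
  have gen : ∀ (r : F) (V : Submodule F A), (∀ x ∈ V, y * x = r • (x * y)) → ∀ d : ℕ,
      V ^ d * Subalgebra.toSubmodule E ≤ Module.End.eigenspace Ω (r ^ d) := by
    intro r V hV d
    induction d with
    | zero =>
      rw [pow_zero, one_mul, pow_zero]
      intro x hx
      rw [hΩ, mem_eig h1 h2, one_smul]
      exact hE x hx
    | succ d ih =>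
      rw [pow_succ', mul_assoc, Submodule.mul_le]
      intro v hv x hx
      have a := ih hx
      rw [hΩ, mem_eig h1 h2] at a ⊢
      rw [← mul_assoc, hV v hv, smul_mul_assoc, mul_assoc, a, mul_smul_comm, smul_smul, pow_succ',
        mul_assoc]
  have gen2 : ∀ (r : F) (V : Submodule F A), (∀ x ∈ V, y * x = r • (x * y)) →
      (∀ m : ℕ, m ≠ 0 → r ^ m ≠ 1) →
      (⨆ d : ℕ, V ^ d * Subalgebra.toSubmodule E) ≤ Subalgebra.toSubmodule E ⊔ Q := by
    intro r V hV hr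
    refine iSup_le ?_
    intro d
    cases d with
    | zero => rw [pow_zero, one_mul]; exact le_sup_left
    | succ d =>
      refine (gen r V hV (d + 1)).trans (le_sup_of_le_right ?_)
      exact le_iSup₂_of_le (r ^ (d + 1)) (hr _ (by omega)) le_rfl
  have hm2 : f ∈ Subalgebra.toSubmodule E ⊔ Q := by
    refine (sup_le (gen2 q VX hX hq) (gen2 q⁻¹ VD hD ?_)) hm
    intro m hm0 h
    rw [inv_pow, inv_eq_one] at h
    exact hq m hm0 h
  obtain ⟨e, he, r, hr, rfl⟩ := Submodule.mem_sup.1 hm2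
  have he' : y * e = e * y := hE e he
  have hr1 : r ∈ Module.End.eigenspace Ω 1 := by
    rw [hΩ, mem_eig h1 h2, one_smul]
    rw [add_mul, mul_add, he'] at hf
    exact (add_left_cancel hf).symm
  have := (Module.End.eigenspaces_iSupIndep Ω) 1
  have h0 : r = 0 := by
    have := Submodule.disjoint_def.1 this r hr1 hr
    exact this
  rw [h0, add_zero]
  exact he
end Centr

section Concrete
variable {F : Type*} [Field F] {N : ℕ}

lemma Xel_eq (i : Fin (N + 1)) : (Xel i : Laur F (N + 1)) = mono (Finsupp.single i 1) 1 := rfl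

lemma zpow_inj_of {q : F} (q0 : q ≠ 0) (hq : ∀ m : ℕ, m ≠ 0 → q ^ m ≠ 1) {a b : ℤ}
    (h : q ^ a = q ^ b) : a = b := by
  have key : ∀ a b : ℤ, a < b → q ^ a ≠ q ^ b := by
    intro a b hab h
    apply hq (b - a).toNat (by omega)
    rw [← zpow_natCast, Int.toNat_of_nonneg (by omega), zpow_sub₀ q0, h, div_self (zpow_ne_zero _ q0)]
  rcases lt_trichotomy a b with h1 | h1 | h1
  · exact absurd h (key a b h1)
  · exact h1
  · exact absurd h.symm (key b a h1)

lemma mono_inj {a b : Fin (N + 1) →₀ ℤ} {r s : F} (hr : r ≠ 0) (h : (mono a r : Laur F (N + 1)) = mono b s) :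
    a = b ∧ r = s := by
  have h1 := congrArg (fun p : Laur F (N + 1) => p.coeff a) h
  simp only [mono, AddMonoidAlgebra.coeff_single, Finsupp.single_apply] at h1
  by_cases hab : b = a
  · subst hab; simp at h1; exact ⟨rfl, h1⟩
  · simp [hab] at h1; exact absurd h1 hr

/-- The hypotheses of the theorem. -/
structure Conc (q τ : F) (W : Equiv.Perm (Fin (N + 1)) → Module.End F (Laur F (N + 1)))
    (T U : ℕ → Module.End F (Laur F (N + 1))) (P : Module.End F (Laur F (N + 1)))
    (Y Yi D : ℕ → Module.End F (Laur F (N + 1))) : Prop where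
  q0 : q ≠ 0
  τ0 : τ ≠ 0
  hq : ∀ m : ℕ, m ≠ 0 → q ^ m ≠ 1
  hW : ∀ (w : Equiv.Perm (Fin (N + 1))) (v : Fin (N + 1) →₀ ℤ) (r : F),
      W w (mono v r) = mono (Finsupp.equivMapDomain w v) r
  hT : ∀ (k : ℕ) (hk : k < N), IsT τ ⟨k, by omega⟩ ⟨k + 1, by omega⟩
      (W (Equiv.swap ⟨k, by omega⟩ ⟨k + 1, by omega⟩)) (T k)
  hU : ∀ k, U k = T k + (τ⁻¹ - τ) • (1 : Module.End F (Laur F (N + 1)))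
  hTU : ∀ k, k < N → T k * U k = 1 ∧ U k * T k = 1
  hP : ∀ (v : Fin (N + 1) →₀ ℤ) (r : F),
      P (mono v r) = q ^ (v 0) • mono (Finsupp.equivMapDomain (finRotate (N + 1)).symm v) r
  hY : ∀ i, Y i = aF T i (N - i) * P * aF U 0 i
  hYinv : ∀ i, i < N + 1 → Y i * Yi i = 1 ∧ Yi i * Y i = 1
  hD : ∀ i, D i = aF T i (N - i) * ((q - q⁻¹)⁻¹ • (XinvOp N * (Y N - Yi N))) * dF T i (N - i)

namespace Conc
variable {q τ : F} {W : Equiv.Perm (Fin (N + 1)) → Module.End F (Laur F (N + 1))}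
    {T U : ℕ → Module.End F (Laur F (N + 1))} {P : Module.End F (Laur F (N + 1))}
    {Y Yi D : ℕ → Module.End F (Laur F (N + 1))}

lemma W_isG (R : Conc q τ W T U P Y Yi D) (w : Equiv.Perm (Fin (N + 1))) : IsG q (W w) :=
  ⟨w, 0, fun v r => by simp [R.hW]⟩

lemma P_isG (R : Conc q τ W T U P Y Yi D) : IsG q P :=
  ⟨(finRotate (N + 1)).symm, Pi.single 0 1, fun v r => by
    rw [R.hP]
    congr 2
    simp [Pi.single_apply]⟩

lemma WX (R : Conc q τ W T U P Y Yi D) (w : Equiv.Perm (Fin (N + 1))) (i : Fin (N + 1)) : W w (Xel i) = Xel (w i) := by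
  rw [Xel_eq, R.hW, Finsupp.equivMapDomain_single]; rfl

lemma PXs (R : Conc q τ W T U P Y Yi D) (j : ℕ) (hj : j < N) : P (Xel ⟨j + 1, by omega⟩) = Xel ⟨j, by omega⟩ := by
  have : (finRotate (N + 1)).symm ⟨j + 1, by omega⟩ = ⟨j, by omega⟩ := by
    rw [Equiv.symm_apply_eq]; exact (finRotate_of_lt hj).symm
  rw [Xel_eq, R.hP, Finsupp.equivMapDomain_single, this]
  have h0 : (Finsupp.single (⟨j + 1, by omega⟩ : Fin (N + 1)) (1 : ℤ)) 0 = 0 := by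
    rw [Finsupp.single_apply, if_neg]; intro h; have := congrArg Fin.val h; simp at this
  rw [h0]; simp; rfl

lemma PX0 (R : Conc q τ W T U P Y Yi D) : P (Xel ⟨0, by omega⟩) = q • Xel ⟨N, by omega⟩ := by
  have : (finRotate (N + 1)).symm ⟨0, by omega⟩ = ⟨N, by omega⟩ := by
    rw [Equiv.symm_apply_eq]; exact finRotate_last'.symm
  rw [Xel_eq, R.hP, Finsupp.equivMapDomain_single, this]
  have h0 : (Finsupp.single (⟨0, by omega⟩ : Fin (N + 1)) (1 : ℤ)) 0 = 1 := by
    rw [Finsupp.single_apply, if_pos]; rfl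
  rw [h0]; simp; rfl

lemma Ppow (R : Conc q τ W T U P Y Yi D) (k : ℕ) : ∀ j (h : j + k < N + 1), (P ^ k) (Xel ⟨j + k, h⟩) = Xel ⟨j, by omega⟩ := by
  induction k with
  | zero => intro j h; rfl
  | succ k ih =>
    intro j h
    rw [pow_succ, Module.End.mul_apply]
    have := R.PXs (j + k) (by omega)
    rw [show (Xel (⟨j + (k + 1), h⟩ : Fin (N + 1)) : Laur F (N + 1)) = Xel ⟨j + k + 1, by omega⟩ from rfl,
      this, ih]

lemma PpowN (R : Conc q τ W T U P Y Yi D) (j : Fin (N + 1)) : (P ^ (N + 1)) (Xel j) = q • Xel j := by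
  obtain ⟨j, hj⟩ := j
  have e : P ^ (N + 1) = P ^ (N - j) * (P * P ^ j) := by
    rw [← pow_succ', ← pow_add]; congr 1; omega
  rw [e, Module.End.mul_apply, Module.End.mul_apply]
  have h1 := R.Ppow j 0 (by omega)
  simp only [zero_add] at h1
  rw [h1, R.PX0, map_smul]
  have h2 := R.Ppow (N - j) j (by omega)
  have : (⟨j + (N - j), by omega⟩ : Fin (N + 1)) = ⟨N, by omega⟩ := by ext; simp; omega
  rw [this] at h2
  rw [h2]

lemma s_intertwine (R : Conc q τ W T U P Y Yi D) {σ : Module.End F (Laur F (N + 1))} (hσ : IsG q σ) {c : F}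
    {i j i' j' : Fin (N + 1)} (hi : σ (Xel i) = c • Xel i') (hj : σ (Xel j) = c • Xel j') :
    σ * W (Equiv.swap i j) = W (Equiv.swap i' j') * σ := by
  obtain ⟨w, l, h⟩ := hσ
  have hX : ∀ (i i' : Fin (N + 1)), σ (Xel i) = c • Xel i' → w i = i' ∧ q ^ l i = c := by
    intro i i' hi
    rw [Xel_eq, h, Finsupp.equivMapDomain_single, Xel_eq, smul_mono, smul_mono, mul_one, mul_one] at hi
    have := mono_inj (zpow_ne_zero _ R.q0) hi
    have h1 : ∑ k, l k * (Finsupp.single i (1 : ℤ)) k = l i := by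
      simp [Finsupp.single_apply]
    rw [h1] at this
    exact ⟨Finsupp.single_left_injective one_ne_zero this.1, this.2⟩
  obtain ⟨a1, a2⟩ := hX i i' hi
  obtain ⟨b1, b2⟩ := hX j j' hj
  have hl : l i = l j := zpow_inj_of R.q0 R.hq (a2.trans b2.symm)
  have hls : ∀ k, l (Equiv.swap i j k) = l k := by
    intro k
    by_cases h1 : k = i
    · subst h1; rw [Equiv.swap_apply_left, hl]
    · by_cases h2 : k = j
      · subst h2; rw [Equiv.swap_apply_right, hl]
      · rw [Equiv.swap_apply_of_ne_of_ne h1 h2]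
  apply mono_ext
  intro v r
  rw [Module.End.mul_apply, Module.End.mul_apply, R.hW, h, h, map_smul, R.hW]
  congr 2
  · rw [← Equiv.sum_comp (Equiv.swap i j)]
    exact Finset.sum_congr rfl (fun k _ => by rw [hls]; simp [Finsupp.equivMapDomain_apply])
  · rw [← Finsupp.equivMapDomain_trans, ← Finsupp.equivMapDomain_trans]
    congr 1
    subst a1 b1
    exact Equiv.mul_swap_eq_swap_mul w i j

lemma T_int (R : Conc q τ W T U P Y Yi D) {σ : Module.End F (Laur F (N + 1))} (hσ : IsG q σ) {c : F} (hc : c ≠ 0)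
    (k k' : ℕ) (hk : k < N) (hk' : k' < N) (hi : σ (Xel ⟨k, by omega⟩) = c • Xel ⟨k', by omega⟩)
    (hj : σ (Xel ⟨k + 1, by omega⟩) = c • Xel ⟨k' + 1, by omega⟩) : σ * T k = T k' * σ :=
  T_intertwine R.q0 hc (by simp) (R.hT k hk) (R.hT k' hk') hσ hi hj (R.s_intertwine hσ hi hj)

lemma PT (R : Conc q τ W T U P Y Yi D) (j : ℕ) (h : j + 1 < N) : P * T (j + 1) = T j * P :=
  R.T_int R.P_isG one_ne_zero (j + 1) j h (by omega) (by rw [R.PXs j (by omega), one_smul])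
    (by rw [R.PXs (j + 1) (by omega), one_smul])

lemma PPT (R : Conc q τ W T U P Y Yi D) (h : 0 < N) : T (N - 1) * (P * P) = P * P * T 0 := by
  refine (R.T_int (IsG.mul R.q0 R.P_isG R.P_isG) R.q0 0 (N - 1) h (by omega) ?_ ?_).symm
  · rw [Module.End.mul_apply, R.PX0, map_smul]
    congr 1
    have := R.PXs (N - 1) (by omega)
    have e : (⟨N - 1 + 1, by omega⟩ : Fin (N + 1)) = ⟨N, by omega⟩ := by ext; simp; omega
    rwa [e] at this
  · have e : (⟨N - 1 + 1, by omega⟩ : Fin (N + 1)) = ⟨N, by omega⟩ := by ext; simp; omega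
    rw [Module.End.mul_apply, R.PXs 0 h, R.PX0, e]

lemma PnT (R : Conc q τ W T U P Y Yi D) (k : ℕ) (h : k < N) : T k * P ^ (N + 1) = P ^ (N + 1) * T k :=
  (R.T_int (IsG.pow R.q0 R.P_isG _) R.q0 k k h h (R.PpowN _) (R.PpowN _)).symm

lemma swap_ne {k j : ℕ} (hk : k < N) (hj : j < N + 1) (h1 : j ≠ k) (h2 : j ≠ k + 1) :
    Equiv.swap (⟨k, by omega⟩ : Fin (N + 1)) ⟨k + 1, by omega⟩ ⟨j, hj⟩ = ⟨j, hj⟩ :=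
  Equiv.swap_apply_of_ne_of_ne (by simpa using h1) (by simpa using h2)

lemma Wmul (R : Conc q τ W T U P Y Yi D) (a b : Equiv.Perm (Fin (N + 1))) : W a * W b = W (a * b) := by
  apply mono_ext
  intro v r
  rw [Module.End.mul_apply, R.hW, R.hW, R.hW, ← Finsupp.equivMapDomain_trans]
  rfl

lemma Wone (R : Conc q τ W T U P Y Yi D) : W 1 = 1 := by
  apply mono_ext
  intro v r
  rw [R.hW]
  have : Finsupp.equivMapDomain 1 v = v := by ext i; rfl
  simp [this]

lemma T_mulX (R : Conc q τ W T U P Y Yi D) (k : ℕ) (hk : k < N) (j : ℕ) (hj : j < N + 1) (h1 : j ≠ k) (h2 : j ≠ k + 1)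
    (p : Laur F (N + 1)) : T k (Xel ⟨j, hj⟩ * p) = Xel ⟨j, hj⟩ * T k p := by
  apply T_mul_inv (by simp) (R.hT k hk)
  intro p
  rw [IsG.map_mul R.q0 (R.W_isG _), R.WX, swap_ne hk hj h1 h2]

lemma TT (R : Conc q τ W T U P Y Yi D) (i j : ℕ) (hij : i + 1 < j) (hj : j < N) : T i * T j = T j * T i := by
  have hs : W (Equiv.swap ⟨i, by omega⟩ ⟨i + 1, by omega⟩) * T j =
      T j * W (Equiv.swap ⟨i, by omega⟩ ⟨i + 1, by omega⟩) :=
    R.T_int (R.W_isG _) one_ne_zero j j hj hj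
      (by rw [R.WX, swap_ne (by omega) (by omega) (by omega) (by omega), one_smul])
      (by rw [R.WX, swap_ne (by omega) (by omega) (by omega) (by omega), one_smul])
  apply LinearMap.ext
  intro p
  apply mul_left_cancel₀ (X_sub_ne_zero (F := F) (i := ⟨i, by omega⟩) (j := ⟨i + 1, by omega⟩) (n := N + 1) (by simp))
  have h1 := R.hT i (by omega) (T j p)
  have h2 := congrArg (T j) (R.hT i (by omega) p)
  have h3 := congrArg (fun f => f p) hs
  simp only [Module.End.mul_apply] at h3 ⊢
  have m := R.T_mulX j hj
  simp only [sub_mul, map_sub, map_add, smul_mul_assoc, map_smul, m i (by omega) (by omega) (by omega),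
    m (i + 1) (by omega) (by omega) (by omega)] at h1 h2 ⊢
  rw [h1, h2, h3]

lemma swap_braid {a b c : Fin (N + 1)} (h1 : a ≠ b) (h2 : b ≠ c) (h3 : a ≠ c) :
    Equiv.swap a b * Equiv.swap b c * Equiv.swap a b = Equiv.swap b c * Equiv.swap a b * Equiv.swap b c := by
  rw [Equiv.swap_mul_swap_mul_swap h1 h3]
  have := Equiv.swap_mul_swap_mul_swap h2.symm h3.symm
  rw [Equiv.swap_comm b a, Equiv.swap_comm c b, Equiv.swap_comm a c] at this
  exact this

lemma TB (R : Conc q τ W T U P Y Yi D) (i : ℕ) (hi : i + 1 < N) : T i * T (i + 1) * T i = T (i + 1) * T i * T (i + 1) := by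
  have n1 : (⟨i, by omega⟩ : Fin (N + 1)) ≠ ⟨i + 1, by omega⟩ := by simp
  have n2 : (⟨i + 1, by omega⟩ : Fin (N + 1)) ≠ ⟨i + 1 + 1, by omega⟩ := by simp; try omega
  have n3 : (⟨i, by omega⟩ : Fin (N + 1)) ≠ ⟨i + 1 + 1, by omega⟩ := by simp; try omega
  refine T_braid R.q0 n1 n2 n3 (R.hT i (by omega)) (R.hT (i + 1) hi) (R.W_isG _) (R.W_isG _)
    ?_ ?_ ?_ ?_ ?_ ?_ ?_ ?_ ?_
  · rw [R.WX, Equiv.swap_apply_left]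
  · rw [R.WX, Equiv.swap_apply_right]
  · rw [R.WX, Equiv.swap_apply_of_ne_of_ne n3.symm n2.symm]
  · rw [R.WX, Equiv.swap_apply_of_ne_of_ne n1 n3]
  · rw [R.WX, Equiv.swap_apply_left]
  · rw [R.WX, Equiv.swap_apply_right]
  · rw [R.Wmul, Equiv.swap_mul_self, R.Wone]
  · rw [R.Wmul, Equiv.swap_mul_self, R.Wone]
  · rw [R.Wmul, R.Wmul, R.Wmul, R.Wmul]
    congr 1
    exact swap_braid n1 n2 n3

lemma XOp_apply (i : ℕ) (hi : i < N + 1) (p : Laur F (N + 1)) :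
    (XOp i : Module.End F (Laur F (N + 1))) p = Xel ⟨i, hi⟩ * p := by
  rw [XOp, dif_pos hi]; rfl

lemma XinvOp_apply (i : ℕ) (hi : i < N + 1) (p : Laur F (N + 1)) :
    (XinvOp i : Module.End F (Laur F (N + 1))) p = XinvEl ⟨i, hi⟩ * p := by
  rw [XinvOp, dif_pos hi]; rfl

lemma XelInv (i : Fin (N + 1)) : (Xel i * XinvEl i : Laur F (N + 1)) = 1 := by
  rw [Xel, XinvEl, mono_mul_mono, ← Finsupp.single_add]; simp [mono_zero_one]

lemma XXiOp (i : ℕ) (hi : i < N + 1) : (XOp i : Module.End F (Laur F (N + 1))) * XinvOp i = 1 := by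
  apply LinearMap.ext; intro p
  rw [Module.End.mul_apply, XOp_apply i hi, XinvOp_apply i hi, ← mul_assoc, XelInv, one_mul]; rfl

lemma XiXOp (i : ℕ) (hi : i < N + 1) : (XinvOp i : Module.End F (Laur F (N + 1))) * XOp i = 1 := by
  apply LinearMap.ext; intro p
  rw [Module.End.mul_apply, XOp_apply i hi, XinvOp_apply i hi, ← mul_assoc, mul_comm (XinvEl _), XelInv, one_mul]; rfl

lemma YN (R : Conc q τ W T U P Y Yi D) : Y N = P * aF U 0 N := by rw [R.hY, Nat.sub_self, aF_zero, one_mul]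

lemma PPi (R : Conc q τ W T U P Y Yi D) : P * (aF U 0 N * Yi N) = 1 := by
  rw [← mul_assoc, ← R.YN]; exact (R.hYinv N (by omega)).1

lemma PiP (R : Conc q τ W T U P Y Yi D) : (aF U 0 N * Yi N) * P = 1 := by
  obtain ⟨g, _, h1, h2⟩ := IsG.exists_inv R.q0 R.P_isG
  have : g = aF U 0 N * Yi N := by
    rw [← mul_one g, ← R.PPi, ← mul_assoc, h2, one_mul]
  rw [← this, h2]

lemma toDRel (R : Conc q τ W T U P Y Yi D) : DRel N q (τ⁻¹ - τ) ((q - q⁻¹)⁻¹) T U (fun i => XOp i) D (XinvOp N) P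
    (aF U 0 N * Yi N) (Y N) (Yi N) where
  q0 := R.q0
  TU k h := (R.hTU k h).1
  UT k h := (R.hTU k h).2
  Udef := R.hU
  TX k h := by
    apply LinearMap.ext; intro p
    rw [Module.End.mul_apply, Module.End.mul_apply, XOp_apply k (by omega), XOp_apply (k + 1) (by omega),
      T_X R.q0 (by simp) (R.hT k h) (R.W_isG _) (by rw [R.WX, Equiv.swap_apply_left]), R.hU]
    rfl
  TXc k j hk hj h1 h2 := by
    apply LinearMap.ext; intro p
    rw [Module.End.mul_apply, Module.End.mul_apply, XOp_apply j (by omega), XOp_apply j (by omega),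
      R.T_mulX k hk j (by omega) h1 h2]
  XX i j hi hj := by
    apply LinearMap.ext; intro p
    rw [Module.End.mul_apply, Module.End.mul_apply, XOp_apply i (by omega), XOp_apply j (by omega),
      XOp_apply i (by omega), XOp_apply j (by omega), mul_left_comm]
  XXi := XXiOp N (by omega)
  XiX := XiXOp N (by omega)
  PX j hj := by
    apply LinearMap.ext; intro p
    rw [Module.End.mul_apply, Module.End.mul_apply, XOp_apply j (by omega), XOp_apply (j + 1) (by omega),
      IsG.map_mul R.q0 R.P_isG, R.PXs j hj]
  PX0 := by
    apply LinearMap.ext; intro p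
    rw [Module.End.mul_apply, LinearMap.smul_apply, Module.End.mul_apply, XOp_apply 0 (by omega),
      XOp_apply N (by omega), IsG.map_mul R.q0 R.P_isG, R.PX0, smul_mul_assoc]
  PT := R.PT
  PPT := R.PPT
  PPi := R.PPi
  PiP := R.PiP
  TT := R.TT
  TB := R.TB
  Ydef := R.YN
  YYi := (R.hYinv N (by omega)).1
  YiY := (R.hYinv N (by omega)).2
  DN := by rw [R.hD, Nat.sub_self, aF_zero, dF_zero, one_mul, mul_one]
  Drec i hi := by
    obtain ⟨l, hl⟩ : ∃ l, N - i = l + 1 := ⟨N - i - 1, by omega⟩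
    rw [R.hD, R.hD (i + 1), hl, show N - (i + 1) = l by omega, aF_succ, dF_succ]
    simp only [mul_assoc]

lemma Yt_eq (R : Conc q τ W T U P Y Yi D) : ((List.range (N + 1)).map Y).prod = P ^ (N + 1) :=
  Yprod T U Y P N R.TT R.TB (fun k h => (R.hTU k h).1) R.toDRel.TUc R.PT R.toDRel.PU R.PnT R.hY

end Conc
end Concrete

section PartOne
variable {F : Type*} [Field F] {N : ℕ}
namespace Conc
variable {q τ : F} {W : Equiv.Perm (Fin (N + 1)) → Module.End F (Laur F (N + 1))}
    {T U : ℕ → Module.End F (Laur F (N + 1))} {P : Module.End F (Laur F (N + 1))}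
    {Y Yi D : ℕ → Module.End F (Laur F (N + 1))}

lemma Ys_mem (R : Conc q τ W T U P Y Yi D) (i : ℕ) (hi : i ≤ N) : Y i ∈ Algebra.adjoin F (HSet N T P (aF U 0 N * Yi N)) := by
  rw [R.hY]
  exact mul_mem (mul_mem (aF_mem _ _ _ _ (fun k _ h => DRel.T_mem k (by omega))) DRel.P_mem)
    (aF_mem _ _ _ _ (fun k _ h => R.toDRel.U_mem k (by omega)))

lemma Yis_eq (R : Conc q τ W T U P Y Yi D) (i : ℕ) (hi : i ≤ N) : Yi i = dF T 0 i * (aF U 0 N * Yi N) * dF U i (N - i) := by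
  have h : Y i * (dF T 0 i * (aF U 0 N * Yi N) * dF U i (N - i)) = 1 := by
    rw [R.hY]
    calc _ = aF T i (N - i) * P * (aF U 0 i * dF T 0 i) * (aF U 0 N * Yi N) * dF U i (N - i) := by
          simp only [mul_assoc]
      _ = aF T i (N - i) * (P * (aF U 0 N * Yi N)) * dF U i (N - i) := by
          rw [aF_dF_inv U T i 0 (fun k _ h => (R.hTU k (by omega)).2), mul_one]; simp only [mul_assoc]
      _ = 1 := by
          rw [R.PPi, mul_one, aF_dF_inv T U (N - i) i (fun k _ h => (R.hTU k (by omega)).1)]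
  rw [← one_mul (dF T 0 i * _ * _), ← (R.hYinv i (by omega)).2, mul_assoc, h, mul_one]

lemma Yis_mem (R : Conc q τ W T U P Y Yi D) (i : ℕ) (hi : i ≤ N) : Yi i ∈ Algebra.adjoin F (HSet N T P (aF U 0 N * Yi N)) := by
  rw [R.Yis_eq i hi]
  exact mul_mem (mul_mem (dF_mem _ _ _ _ (fun k _ h => DRel.T_mem k (by omega))) DRel.Pi_mem)
    (dF_mem _ _ _ _ (fun k _ h => R.toDRel.U_mem k (by omega)))

lemma H_le_gen (R : Conc q τ W T U P Y Yi D) (S : Subalgebra F (Module.End F (Laur F (N + 1)))) (hT : ∀ k, k < N → T k ∈ S)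
    (hY : Y N ∈ S) (hYi : Yi N ∈ S) : Algebra.adjoin F (HSet N T P (aF U 0 N * Yi N)) ≤ S := by
  apply Algebra.adjoin_le
  rintro x (⟨k, hk, rfl⟩ | rfl | rfl)
  · exact hT k hk
  · rw [← R.toDRel.YdF]
    exact mul_mem hY (dF_mem _ _ _ _ (fun k _ h => hT k (by omega)))
  · refine mul_mem (aF_mem _ _ _ _ (fun k _ h => ?_)) hYi
    rw [R.hU]
    exact add_mem (hT k (by omega)) (Subalgebra.smul_mem _ (one_mem _) _)

lemma Hgl_eq (R : Conc q τ W T U P Y Yi D) : Algebra.adjoin F (HglSet T Y Yi (fun i j => XOp i * D j)) =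
    Algebra.adjoin F (ESet N T (fun i => XOp i) D P (aF U 0 N * Yi N)) := by
  apply le_antisymm
  · apply Algebra.adjoin_le
    rintro x (⟨k, hk, rfl⟩ | ⟨i, hi, rfl⟩ | ⟨i, hi, rfl⟩ | ⟨i, j, hi, hj, _, rfl⟩)
    · exact DRel.H_le (DRel.T_mem k (by omega))
    · exact DRel.H_le (R.Ys_mem i (by omega))
    · exact DRel.H_le (R.Yis_mem i (by omega))
    · exact DRel.XD_memE (X := fun i => XOp i) i j (by omega) (by omega)
  · have hH : Algebra.adjoin F (HSet N T P (aF U 0 N * Yi N)) ≤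
        Algebra.adjoin F (HglSet T Y Yi (fun i j => XOp i * D j)) := by
      apply R.H_le_gen
      · intro k hk; exact Algebra.subset_adjoin (Or.inl ⟨k, by omega, rfl⟩)
      · exact Algebra.subset_adjoin (Or.inr (Or.inl ⟨N, by omega, rfl⟩))
      · exact Algebra.subset_adjoin (Or.inr (Or.inr (Or.inl ⟨N, by omega, rfl⟩)))
    apply Algebra.adjoin_le
    rintro x (hx | ⟨i, j, hi, hj, rfl⟩)
    · exact hH (Algebra.subset_adjoin hx)
    · refine R.toDRel.XD_mem (Subalgebra.toSubmodule
        (Algebra.adjoin F (HglSet T Y Yi (fun i j => XOp i * D j)))) ?_ ?_ ?_ ?_ i j hi hj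
      · intro h hh m hm; exact Subalgebra.mul_mem _ (hH hh) hm
      · intro h hh m hm; exact Subalgebra.mul_mem _ hm (hH hh)
      · exact hH R.toDRel.XDN_memH
      · intro m hm
        exact Algebra.subset_adjoin (Or.inr (Or.inr (Or.inr ⟨m, N, by omega, by omega, by omega, rfl⟩)))

lemma ypow_inv (R : Conc q τ W T U P Y Yi D) : P ^ (N + 1) * (aF U 0 N * Yi N) ^ (N + 1) = 1 ∧
    (aF U 0 N * Yi N) ^ (N + 1) * P ^ (N + 1) = 1 := by
  have hc : Commute P (aF U 0 N * Yi N) := by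
    rw [Commute, SemiconjBy, R.PPi, R.PiP]
  constructor
  · rw [← hc.mul_pow, R.PPi, one_pow]
  · rw [← hc.symm.mul_pow, R.PiP, one_pow]

lemma y_H (R : Conc q τ W T U P Y Yi D) : ∀ x ∈ Algebra.adjoin F (HSet N T P (aF U 0 N * Yi N)), P ^ (N + 1) * x = x * P ^ (N + 1) := by
  have : Algebra.adjoin F (HSet N T P (aF U 0 N * Yi N)) ≤ Subalgebra.centralizer F {P ^ (N + 1)} := by
    apply Algebra.adjoin_le
    rintro x (⟨k, hk, rfl⟩ | rfl | rfl) _ rfl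
    · exact (R.PnT k hk).symm
    · rw [← pow_succ, ← pow_succ']
    · have : P * P ^ (N + 1) = P ^ (N + 1) * P := by rw [← pow_succ, ← pow_succ']
      exact inv_comm_of this.symm R.PPi R.PiP
  intro x hx
  exact this hx _ rfl

lemma y_X (R : Conc q τ W T U P Y Yi D) (j : ℕ) (hj : j ≤ N) : P ^ (N + 1) * XOp j = q • (XOp j * P ^ (N + 1)) := by
  apply LinearMap.ext; intro p
  rw [Module.End.mul_apply, LinearMap.smul_apply, Module.End.mul_apply, XOp_apply j (by omega),
      XOp_apply j (by omega), IsG.map_mul R.q0 (IsG.pow R.q0 R.P_isG _), R.PpowN, smul_mul_assoc]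

lemma y_D (R : Conc q τ W T U P Y Yi D) (j : ℕ) (hj : j ≤ N) : P ^ (N + 1) * D j = q⁻¹ • (D j * P ^ (N + 1)) := by
  have h1 : P ^ (N + 1) * XinvOp N = q⁻¹ • (XinvOp N * P ^ (N + 1)) := by
    have hX := R.y_X N le_rfl
    have h : P ^ (N + 1) * XOp N = XOp N * (q • P ^ (N + 1)) := by rw [hX, mul_smul_comm]
    have := conj_of h (XXiOp N (by omega)) (XiXOp N (by omega))
    rw [this, smul_mul_assoc, smul_smul, inv_mul_cancel₀ R.q0, one_smul]
  have h2 := R.y_H _ R.toDRel.Y_mem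
  have h3 := R.y_H _ R.toDRel.Yi_mem
  have h4 : P ^ (N + 1) * D N = q⁻¹ • (D N * P ^ (N + 1)) := by
    rw [R.toDRel.DN, mul_smul_comm, smul_mul_assoc, ← mul_assoc, h1, smul_comm]
    simp only [smul_mul_assoc, mul_assoc]
    rw [mul_sub, h2, h3, ← sub_mul]
  have h5 := R.y_H _ (aF_mem (Algebra.adjoin F (HSet N T P (aF U 0 N * Yi N))) T (N - j) j
    (fun k _ h => DRel.T_mem k (by omega)))
  have h6 := R.y_H _ (dF_mem (Algebra.adjoin F (HSet N T P (aF U 0 N * Yi N))) T (N - j) j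
    (fun k _ h => DRel.T_mem k (by omega)))
  rw [R.toDRel.Dform (N - j) j (by omega), ← mul_assoc, ← mul_assoc, h5, mul_assoc (aF T j _), h4]
  simp only [mul_smul_comm, smul_mul_assoc, mul_assoc]
  rw [h6]

lemma y_E (R : Conc q τ W T U P Y Yi D) : ∀ x ∈ Algebra.adjoin F (ESet N T (fun i => XOp i) D P (aF U 0 N * Yi N)),
    P ^ (N + 1) * x = x * P ^ (N + 1) := by
  have : Algebra.adjoin F (ESet N T (fun i => XOp i) D P (aF U 0 N * Yi N)) ≤
      Subalgebra.centralizer F {P ^ (N + 1)} := by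
    apply Algebra.adjoin_le
    rintro x (hx | ⟨i, j, hi, hj, rfl⟩) _ rfl
    · exact R.y_H _ (Algebra.subset_adjoin hx)
    · rw [← mul_assoc, R.y_X i hi, smul_mul_assoc, mul_assoc, R.y_D j hj, mul_smul_comm, smul_smul,
        mul_inv_cancel₀ R.q0, one_smul, mul_assoc]
  intro x hx
  exact this hx _ rfl

lemma Vs_scale {V : ℕ → Module.End F (Laur F (N + 1))} {y : Module.End F (Laur F (N + 1))} {r : F}
    (h : ∀ j, j ≤ N → y * V j = r • (V j * y)) : ∀ x ∈ Vs F N V, y * x = r • (x * y) := by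
  have : Vs F N V ≤ LinearMap.ker (LinearMap.mulLeft F y - r • LinearMap.mulRight F y) := by
    apply Vs_le
    intro j hj
    simp [h j hj]
  intro x hx
  have := this hx
  simpa [sub_eq_zero] using this

lemma E_le_A (R : Conc q τ W T U P Y Yi D) : Algebra.adjoin F (ESet N T (fun i => XOp i) D P (aF U 0 N * Yi N)) ≤
    Algebra.adjoin F (AfrSet T (fun i => XOp i) D Y Yi) := by
  rw [← R.Hgl_eq]
  apply Algebra.adjoin_le
  rintro x (⟨k, hk, rfl⟩ | ⟨i, hi, rfl⟩ | ⟨i, hi, rfl⟩ | ⟨i, j, hi, hj, _, rfl⟩)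
  · exact Algebra.subset_adjoin (Or.inl ⟨k, hk, rfl⟩)
  · exact Algebra.subset_adjoin (Or.inr ⟨i, hi, Or.inr (Or.inr (Or.inl rfl))⟩)
  · exact Algebra.subset_adjoin (Or.inr ⟨i, hi, Or.inr (Or.inr (Or.inr rfl))⟩)
  · exact mul_mem (Algebra.subset_adjoin (Or.inr ⟨i, hi, Or.inl rfl⟩))
      (Algebra.subset_adjoin (Or.inr ⟨j, hj, Or.inr (Or.inl rfl)⟩))

lemma part_one (R : Conc q τ W T U P Y Yi D) (f : Module.End F (Laur F (N + 1))) :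
    (f ∈ Algebra.adjoin F (AfrSet T (fun i => XOp i) D Y Yi) ∧ f * P ^ (N + 1) = P ^ (N + 1) * f) ↔
      f ∈ Algebra.adjoin F (HglSet T Y Yi (fun i j => XOp i * D j)) := by
  rw [R.Hgl_eq]
  constructor
  · rintro ⟨h1, h2⟩
    refine centr_mem R.ypow_inv.1 R.ypow_inv.2 q R.q0 R.hq _ (Vs F N (fun i => XOp i)) (Vs F N D)
      R.y_E (Vs_scale R.y_X) (Vs_scale R.y_D) h2 (R.toDRel.big _ ?_ h1)
    rintro s (⟨k, hk, rfl⟩ | ⟨i, hi, rfl | rfl | rfl | rfl⟩)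
    · exact Or.inl (DRel.H_le (DRel.T_mem k (by omega)))
    · exact Or.inr (Or.inl (Vs_mem _ (by omega)))
    · exact Or.inr (Or.inr (Vs_mem _ (by omega)))
    · exact Or.inl (DRel.H_le (R.Ys_mem i (by omega)))
    · exact Or.inl (DRel.H_le (R.Yis_mem i (by omega)))
  · intro h
    exact ⟨R.E_le_A h, (R.y_E f h).symm⟩

lemma Yti_inv (R : Conc q τ W T U P Y Yi D) (m : ℕ) (hm : m ≤ N + 1) :
    ((List.range m).map Y).prod * (((List.range m).map Yi).reverse).prod = 1 ∧
    (((List.range m).map Yi).reverse).prod * ((List.range m).map Y).prod = 1 := by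
  induction m with
  | zero => simp
  | succ m ih =>
    obtain ⟨h1, h2⟩ := ih (by omega)
    obtain ⟨h3, h4⟩ := R.hYinv m (by omega)
    simp only [List.range_succ, List.map_append, List.prod_append, List.reverse_append, List.map_cons,
      List.map_nil, List.prod_cons, List.prod_nil, mul_one, List.reverse_cons, List.reverse_nil,
      List.nil_append]
    constructor
    · rw [mul_assoc, ← mul_assoc (Y m), h3, one_mul, h1]
    · rw [mul_assoc, ← mul_assoc _ _ (Y m), h2, one_mul, h4]

end Conc
end PartOne

section PartTwoA
variable {F : Type*} [Field F] {N : ℕ}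

/-- total degree -/
def tdeg (v : Fin (N + 1) →₀ ℤ) : ℤ := ∑ i, v i

lemma tdeg_add (v w : Fin (N + 1) →₀ ℤ) : tdeg (v + w) = tdeg v + tdeg w := by
  simp [tdeg, Finset.sum_add_distrib]

lemma tdeg_single (i : Fin (N + 1)) (d : ℤ) : tdeg (Finsupp.single i d) = d := by
  simp [tdeg, Finsupp.single_apply]

lemma abs_shift {A : Type*} [Ring A] [Algebra F A] (E : ℤ → Submodule F A) (hE : iSupIndep E) {u v g : A}
    (huv : u * v = 1) (hu : ∀ m x, x ∈ E m → x * u ∈ E (m + 2)) (hg : g ∈ ⨆ m, E m)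
    (h : g * u = g) : g = 0 := by
  obtain ⟨f, hf, hs⟩ := (Submodule.mem_iSup_iff_exists_finsupp _ _).1 hg
  by_contra hne
  have hsupp : f.support.Nonempty := by
    rw [Finset.nonempty_iff_ne_empty]
    intro h0
    apply hne
    rw [← hs, Finsupp.sum, h0, Finset.sum_empty]
  obtain ⟨m, hmm, hmax⟩ : ∃ m ∈ f.support, ∀ j ∈ f.support, j ≤ m :=
    ⟨f.support.max' hsupp, Finset.max'_mem _ _, fun j hj => Finset.le_max' _ _ hj⟩
  have hind := hE (m + 2)
  have h1 : f m * u ∈ E (m + 2) := hu m _ (hf m)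
  have h2 : f m * u ∈ ⨆ j : ℤ, ⨆ (_ : j ≠ m + 2), E j := by
    have e : f m * u = (∑ j ∈ f.support, f j) - ∑ j ∈ f.support.erase m, f j * u := by
      have e1 : (∑ j ∈ f.support, f j) = g := hs
      have e2 : ∑ j ∈ f.support, f j * u = g := by rw [← Finset.sum_mul, e1, h]
      have e3 : f m * u + ∑ j ∈ f.support.erase m, f j * u
          = ∑ j ∈ f.support, f j * u :=
        Finset.add_sum_erase f.support (fun j => f j * u) hmm
      rw [e1]
      exact eq_sub_of_add_eq (e3.trans e2)
    rw [e]
    refine Submodule.sub_mem _ (Submodule.sum_mem _ ?_) (Submodule.sum_mem _ ?_)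
    · intro j hj
      have : j ≤ m := hmax j hj
      exact Submodule.mem_iSup_of_mem j (Submodule.mem_iSup_of_mem (by omega) (hf j))
    · intro j hj
      have : j ≠ m := Finset.ne_of_mem_erase hj
      exact Submodule.mem_iSup_of_mem (j + 2) (Submodule.mem_iSup_of_mem (by omega) (hu j _ (hf j)))
  have h0 := Submodule.disjoint_def.1 hind _ h1 h2
  apply Finsupp.mem_support_iff.1 hmm
  calc f m = f m * u * v := by rw [mul_assoc, huv, mul_one]
    _ = 0 := by rw [h0, zero_mul]

namespace Conc
variable {q τ : F} {W : Equiv.Perm (Fin (N + 1)) → Module.End F (Laur F (N + 1))}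
    {T U : ℕ → Module.End F (Laur F (N + 1))} {P : Module.End F (Laur F (N + 1))}
    {Y Yi D : ℕ → Module.End F (Laur F (N + 1))}

lemma G_X {q : F} (q0 : q ≠ 0) {σ : Module.End F (Laur F (N + 1))} {w : Equiv.Perm (Fin (N + 1))}
    {l : Fin (N + 1) → ℤ} (h : ∀ v r,
    σ (mono v r) = q ^ (∑ i, l i * v i) • mono (Finsupp.equivMapDomain w v) r) (c : F)
    (i i' : Fin (N + 1)) (hi : σ (Xel i) = c • Xel i') : w i = i' ∧ q ^ l i = c := by
  rw [Xel_eq, h, Finsupp.equivMapDomain_single, Xel_eq, smul_mono, smul_mono, mul_one, mul_one] at hi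
  have := mono_inj (zpow_ne_zero _ q0) hi
  have h1 : ∑ k, l k * (Finsupp.single i (1 : ℤ)) k = l i := by
    simp [Finsupp.single_apply]
  rw [h1] at this
  exact ⟨Finsupp.single_left_injective one_ne_zero this.1, this.2⟩

lemma ypow_mono (R : Conc q τ W T U P Y Yi D) (v : Fin (N + 1) →₀ ℤ) (r : F) :
    (P ^ (N + 1)) (mono v r) = q ^ tdeg v • mono v r := by
  obtain ⟨w, l, h⟩ := IsG.pow R.q0 R.P_isG (N + 1)
  have h1 : ∀ i, w i = i ∧ l i = 1 := by
    intro i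
    obtain ⟨a, b⟩ := G_X R.q0 h q i i (R.PpowN i)
    exact ⟨a, zpow_inj_of R.q0 R.hq (by rw [b, zpow_one])⟩
  have hw : w = 1 := Equiv.ext (fun i => (h1 i).1)
  rw [h]
  subst hw
  have : Finsupp.equivMapDomain 1 v = v := by ext i; rfl
  rw [this]
  congr 2
  exact Finset.sum_congr rfl (fun i _ => by rw [(h1 i).2, one_mul])

lemma zpow_mono (R : Conc q τ W T U P Y Yi D) {y yi : Module.End F (Laur F (N + 1))} (hy : y = P ^ (N + 1)) (hyi : yi * y = 1)
    (m : ℤ) (v : Fin (N + 1) →₀ ℤ) (r : F) :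
    zpowOp y yi m (mono v r) = q ^ (m * tdeg v) • mono v r := by
  have h1 : y (mono v r) = q ^ tdeg v • mono v r := by rw [hy, R.ypow_mono]
  have h2 : yi (mono v r) = (q ^ tdeg v)⁻¹ • mono v r := by
    have := congrArg yi h1
    rw [← Module.End.mul_apply, hyi, map_smul] at this
    rw [Module.End.one_apply] at this
    rw [this, smul_smul, inv_mul_cancel₀ (zpow_ne_zero _ R.q0), one_smul]
    rw [← this]
  have key : ∀ (u : Module.End F (Laur F (N + 1))) (c : F), u (mono v r) = c • mono v r →
      ∀ k : ℕ, (u ^ k) (mono v r) = c ^ k • mono v r := by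
    intro u c hu k
    induction k with
    | zero => simp
    | succ k ih => rw [pow_succ, Module.End.mul_apply, hu, map_smul, ih, smul_smul, pow_succ']
  rw [zpowOp]
  split_ifs with hm
  · rw [key y _ h1]
    congr 1
    rw [← zpow_natCast, ← zpow_mul, Int.toNat_of_nonneg hm, mul_comm]
  · rw [key yi _ h2]
    congr 1
    rw [← zpow_natCast, ← zpow_neg, ← zpow_mul, Int.toNat_of_nonneg (by omega)]
    congr 1; ring

/-- Generators of the double affine Hecke algebra. -/
def DSet (T : ℕ → Module.End F (Laur F (N + 1))) (P Pi : Module.End F (Laur F (N + 1))) :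
    Set (Module.End F (Laur F (N + 1))) :=
  {f | f ∈ HSet N T P Pi ∨ (∃ i, i ≤ N ∧ (f = XOp i ∨ f = XinvOp i))}

lemma H_le_D {Pi : Module.End F (Laur F (N + 1))} : Algebra.adjoin F (HSet N T P Pi) ≤
    Algebra.adjoin F (DSet T P Pi) := Algebra.adjoin_mono (fun _ h => Or.inl h)

lemma X_mem_D {Pi : Module.End F (Laur F (N + 1))} (i : ℕ) (hi : i ≤ N) :
    XOp i ∈ Algebra.adjoin F (DSet T P Pi) := Algebra.subset_adjoin (Or.inr ⟨i, hi, Or.inl rfl⟩)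

lemma Xinv_mem_D {Pi : Module.End F (Laur F (N + 1))} (i : ℕ) (hi : i ≤ N) :
    XinvOp i ∈ Algebra.adjoin F (DSet T P Pi) := Algebra.subset_adjoin (Or.inr ⟨i, hi, Or.inr rfl⟩)

lemma A_le_D (R : Conc q τ W T U P Y Yi D) : Algebra.adjoin F (AfrSet T (fun i => XOp i) D Y Yi) ≤
    Algebra.adjoin F (DSet T P (aF U 0 N * Yi N)) := by
  apply Algebra.adjoin_le
  rintro s (⟨k, hk, rfl⟩ | ⟨i, hi, rfl | rfl | rfl | rfl⟩)
  · exact H_le_D (DRel.T_mem k (by omega))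
  · exact X_mem_D i (by omega)
  · rw [R.hD]
    refine mul_mem (mul_mem (H_le_D (aF_mem _ _ _ _ (fun k _ h => DRel.T_mem k (by omega)))) ?_)
      (H_le_D (dF_mem _ _ _ _ (fun k _ h => DRel.T_mem k (by omega))))
    exact Subalgebra.smul_mem _ (mul_mem (Xinv_mem_D N le_rfl)
      (sub_mem (H_le_D (R.Ys_mem N le_rfl)) (H_le_D (R.Yis_mem N le_rfl)))) _
  · exact H_le_D (R.Ys_mem i (by omega))
  · exact H_le_D (R.Yis_mem i (by omega))

/-- the all-ones exponent -/
def ones (N : ℕ) (c : ℤ) : Fin (N + 1) →₀ ℤ := Finsupp.equivFunOnFinite.symm (fun _ => c)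

lemma ones_map (w : Equiv.Perm (Fin (N + 1))) (c : ℤ) : Finsupp.equivMapDomain w (ones N c) = ones N c := by
  ext i; simp [ones]

lemma ones_mul : (mono (ones N 1) 1 * mono (ones N (-1)) 1 : Laur F (N + 1)) = 1 := by
  rw [mono_mul_mono, mul_one, ← mono_zero_one]
  congr 1
  ext i; simp [ones]

/-- conjugation grading -/
def Eg (q : F) (m : ℤ) : Submodule F (Module.End F (Laur F (N + 1))) :=
  Module.End.eigenspace (LinearMap.mulLeft F (mulOp (mono (ones N (-1)) 1) : Module.End F (Laur F (N + 1))) *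
    LinearMap.mulRight F (mulOp (mono (ones N 1) 1) : Module.End F (Laur F (N + 1)))) (q ^ m)

lemma mem_Eg {q : F} {m : ℤ} {x : Module.End F (Laur F (N + 1))} : x ∈ Eg q m ↔
    mulOp (mono (ones N (-1)) 1) * x = q ^ m • (x * mulOp (mono (ones N (-1)) 1)) := by
  apply mem_eig
  · rw [← mulOp_mul, mul_comm, ones_mul]; apply LinearMap.ext; intro p; simp [mulOp]
  · rw [← mulOp_mul, ones_mul]; apply LinearMap.ext; intro p; simp [mulOp]

lemma Eg_mul {q : F} (q0 : q ≠ 0) {a b : ℤ} {x y : Module.End F (Laur F (N + 1))} (hx : x ∈ Eg q a)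
    (hy : y ∈ Eg q b) : x * y ∈ Eg q (a + b) := by
  rw [mem_Eg] at *
  rw [← mul_assoc, hx, smul_mul_assoc, mul_assoc, hy, mul_smul_comm, smul_smul, zpow_add₀ q0, mul_assoc]

lemma Eg_one {q : F} : (1 : Module.End F (Laur F (N + 1))) ∈ Eg q 0 := by
  rw [mem_Eg]; simp

lemma T_Eg (R : Conc q τ W T U P Y Yi D) (k : ℕ) (hk : k < N) : T k ∈ Eg q 0 := by
  rw [mem_Eg, zpow_zero, one_smul]
  apply LinearMap.ext
  intro p
  refine (T_mul_inv (by simp) (R.hT k hk) (mono (ones N (-1)) 1) ?_ p).symm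
  intro p
  rw [IsG.map_mul R.q0 (R.W_isG _), R.hW, ones_map]

lemma mul_Eg (u : Laur F (N + 1)) : mulOp u ∈ Eg q 0 := by
  rw [mem_Eg, zpow_zero, one_smul, ← mulOp_mul, ← mulOp_mul, mul_comm]

lemma P_Eg (R : Conc q τ W T U P Y Yi D) : P ∈ Eg q 1 := by
  rw [mem_Eg, zpow_one]
  apply LinearMap.ext
  intro p
  have : P (mono (ones N (-1)) 1 * p) = q⁻¹ • (mono (ones N (-1)) 1 * P p) := by
    rw [IsG.map_mul R.q0 R.P_isG, R.hP, ones_map, smul_mul_assoc]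
    congr 1
    simp [ones]
  change mono (ones N (-1)) 1 * P p = q • P (mono (ones N (-1)) 1 * p)
  rw [this, smul_smul, mul_inv_cancel₀ R.q0, one_smul]

lemma Eg_inv {q : F} (q0 : q ≠ 0) {a : ℤ} {x y : Module.End F (Laur F (N + 1))} (hx : x ∈ Eg q a)
    (h1 : x * y = 1) (h2 : y * x = 1) : y ∈ Eg q (-a) := by
  rw [mem_Eg] at *
  set e := (mulOp (mono (ones N (-1)) 1) : Module.End F (Laur F (N + 1)))
  have h3 : x * e = q ^ (-a) • (e * x) := by
    rw [hx, smul_smul, zpow_neg, inv_mul_cancel₀ (zpow_ne_zero _ q0), one_smul]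
  calc e * y = y * (x * e) * y := by rw [← mul_assoc, h2, one_mul]
    _ = q ^ (-a) • (y * e * (x * y)) := by
      rw [h3, mul_smul_comm, smul_mul_assoc]; simp only [mul_assoc]
    _ = _ := by rw [h1, mul_one]

lemma D_graded (R : Conc q τ W T U P Y Yi D) {x : Module.End F (Laur F (N + 1))}
    (hx : x ∈ Algebra.adjoin F (DSet T P (aF U 0 N * Yi N))) : x ∈ ⨆ m : ℤ, Eg q m := by
  refine gen_left _ _ (Submodule.mem_iSup_of_mem 0 Eg_one) ?_ hx
  have key : ∀ (a : ℤ) (s : Module.End F (Laur F (N + 1))), s ∈ Eg q a → ∀ y ∈ ⨆ m : ℤ, Eg q m,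
      s * y ∈ ⨆ m : ℤ, Eg q m := by
    intro a s hs y hy
    have : (⨆ m : ℤ, Eg q m) ≤ (⨆ m : ℤ, Eg q m).comap (LinearMap.mulLeft F s) := by
      refine iSup_le (fun m y hy => ?_)
      exact Submodule.mem_iSup_of_mem (a + m) (Eg_mul R.q0 hs hy)
    exact this hy
  rintro s ((⟨k, hk, rfl⟩ | rfl | rfl) | ⟨i, hi, rfl | rfl⟩)
  · exact key 0 _ (R.T_Eg k hk)
  · exact key 1 _ R.P_Eg
  · exact key (-1) _ (Eg_inv R.q0 R.P_Eg R.PPi R.PiP)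
  · refine key 0 _ ?_
    rw [XOp, dif_pos (by omega)]; exact mul_Eg _
  · refine key 0 _ ?_
    rw [XinvOp, dif_pos (by omega)]; exact mul_Eg _

lemma Y_Eg (R : Conc q τ W T U P Y Yi D) : Y N ∈ Eg q 1 := by
  rw [R.YN]
  have : ∀ l, l ≤ N → P * aF U 0 l ∈ Eg q 1 := by
    intro l
    induction l with
    | zero => intro _; rw [aF_zero, mul_one]; exact R.P_Eg
    | succ l ih =>
      intro hl
      rw [aF_succ', ← mul_assoc]
      have := Eg_mul R.q0 (ih (by omega)) (Eg_inv R.q0 (R.T_Eg l (by omega)) (R.hTU l (by omega)).1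
        (R.hTU l (by omega)).2)
      simpa using this
  exact this N le_rfl

lemma Eg_indep (R : Conc q τ W T U P Y Yi D) : iSupIndep (fun m : ℤ => (Eg q m : Submodule F (Module.End F (Laur F (N + 1))))) :=
  (Module.End.eigenspaces_iSupIndep _).comp (f := fun m : ℤ => q ^ m)
    (fun _ _ h => zpow_inj_of R.q0 R.hq h)

lemma no_YY (R : Conc q τ W T U P Y Yi D) {g : Module.End F (Laur F (N + 1))}
    (hg : g ∈ Algebra.adjoin F (DSet T P (aF U 0 N * Yi N))) (h : g * (Y N * Y N) = g) : g = 0 := by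
  have hYi := (R.hYinv N (Nat.lt_succ_self N)).1
  refine abs_shift (fun m : ℤ => (Eg q m : Submodule F (Module.End F (Laur F (N + 1))))) R.Eg_indep
    (u := Y N * Y N) (v := Yi N * Yi N) ?_ ?_ (R.D_graded hg) h
  · rw [mul_assoc (Y N), ← mul_assoc (Y N) (Yi N), hYi, one_mul, hYi]
  · intro m x hx
    have h1 := Eg_mul R.q0 hx (Eg_mul R.q0 R.Y_Eg R.Y_Eg)
    have h2 : m + (1 + 1) = m + 2 := by norm_num
    rw [h2] at h1
    exact h1

lemma comm_ratio (R : Conc q τ W T U P Y Yi D) {f : Module.End F (Laur F (N + 1))}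
    (hf : f ∈ Algebra.adjoin F (DSet T P (aF U 0 N * Yi N)))
    (hc : ∀ i, i ≤ N → f * (XOp i * D N) = XOp i * D N * f) (i k : ℕ) (hi : i ≤ N) (hk : k ≤ N) :
    f * (XOp i * XinvOp k) = XOp i * XinvOp k * f := by
  have hc0 : (q - q⁻¹)⁻¹ ≠ 0 := by
    apply inv_ne_zero
    intro h
    apply R.hq 2 (by omega)
    have : q = q⁻¹ := sub_eq_zero.1 h
    rw [pow_two]; nth_rewrite 2 [this]; exact mul_inv_cancel₀ R.q0
  have h1 : ∀ i, i ≤ N → XinvOp i * f * XOp i * D N = D N * f := by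
    intro i hi
    rw [mul_assoc, mul_assoc, hc i hi, ← mul_assoc, ← mul_assoc, XiXOp i (by omega), one_mul]
  set g := (XinvOp i * f * XOp i - XinvOp k * f * XOp k) * XinvOp N with hg
  have hgm : g ∈ Algebra.adjoin F (DSet T P (aF U 0 N * Yi N)) :=
    mul_mem (sub_mem (mul_mem (mul_mem (Xinv_mem_D i hi) hf) (X_mem_D i hi))
      (mul_mem (mul_mem (Xinv_mem_D k hk) hf) (X_mem_D k hk))) (Xinv_mem_D N le_rfl)
  have h2 : g * (Y N - Yi N) = 0 := by
    have : (XinvOp i * f * XOp i - XinvOp k * f * XOp k) * D N = 0 := by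
      rw [sub_mul, h1 i hi, h1 k hk, sub_self]
    rw [R.toDRel.DN, mul_smul_comm, ← mul_assoc] at this
    exact (smul_eq_zero.1 this).resolve_left hc0
  have h3 : g * (Y N * Y N) = g := by
    rw [mul_sub, sub_eq_zero] at h2
    rw [← mul_assoc, h2, mul_assoc, (R.hYinv N (by omega)).2, mul_one]
  have h4 := R.no_YY hgm h3
  have h5 : XinvOp i * f * XOp i = XinvOp k * f * XOp k := by
    have : (XinvOp i * f * XOp i - XinvOp k * f * XOp k) * XinvOp N * XOp N = 0 := by
      rw [← hg, h4, zero_mul]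
    rw [mul_assoc, XiXOp N (by omega), mul_one] at this
    exact sub_eq_zero.1 this
  calc f * (XOp i * XinvOp k) = XOp i * (XinvOp i * f * XOp i) * XinvOp k := by
        rw [← mul_assoc, ← mul_assoc, ← mul_assoc, XXiOp i (by omega), one_mul]
    _ = XOp i * XinvOp k * f * (XOp k * XinvOp k) := by rw [h5]; simp only [mul_assoc]
    _ = _ := by rw [XXiOp k (by omega), mul_one]

end Conc
end PartTwoA

section PartTwoB
variable {F : Type*} [Field F] {N : ℕ}

lemma IsG_coeff {q : F} {σ : Module.End F (Laur F (N + 1))} {w : Equiv.Perm (Fin (N + 1))}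
    {l : Fin (N + 1) → ℤ} (h : ∀ v r,
    σ (mono v r) = q ^ (∑ i, l i * v i) • mono (Finsupp.equivMapDomain w v) r)
    (p : Laur F (N + 1)) (v : Fin (N + 1) →₀ ℤ) :
    (σ p).coeff (Finsupp.equivMapDomain w v) = q ^ (∑ i, l i * v i) * p.coeff v := by
  induction p using AddMonoidAlgebra.induction_linear with
  | zero => simp
  | add x y hx hy => simp only [map_add, AddMonoidAlgebra.coeff_add, Finsupp.add_apply, hx, hy, mul_add]
  | single a r =>
    have h1 := h a r
    rw [smul_mono] at h1
    rw [mono, mono] at h1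
    rw [h1, AddMonoidAlgebra.coeff_single, AddMonoidAlgebra.coeff_single, Finsupp.single_apply, Finsupp.single_apply]
    by_cases hav : a = v
    · subst hav; simp
    · rw [if_neg, if_neg hav, mul_zero]
      intro h2
      apply hav
      ext i
      have := DFunLike.congr_fun h2 (w i)
      simpa using this

namespace Conc
variable {q τ : F} {W : Equiv.Perm (Fin (N + 1)) → Module.End F (Laur F (N + 1))}
    {T U : ℕ → Module.End F (Laur F (N + 1))} {P : Module.End F (Laur F (N + 1))}
    {Y Yi D : ℕ → Module.End F (Laur F (N + 1))}

lemma comm_mono {f : Module.End F (Laur F (N + 1))}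
    (hr : ∀ i k, i ≤ N → k ≤ N → f * (XOp i * XinvOp k) = XOp i * XinvOp k * f)
    (u : Fin (N + 1) →₀ ℤ) (hu : tdeg u = 0) (p : Laur F (N + 1)) :
    f (mono u 1 * p) = mono u 1 * f p := by
  let S : AddSubgroup (Fin (N + 1) →₀ ℤ) :=
    { carrier := {u | ∀ p : Laur F (N + 1), f (mono u 1 * p) = mono u 1 * f p}
      zero_mem' := by intro p; rw [mono_zero_one, one_mul, one_mul]
      add_mem' := by
        intro a b ha hb p
        have : (mono (a + b) 1 : Laur F (N + 1)) = mono a 1 * mono b 1 := by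
          rw [mono_mul_mono, mul_one]
        rw [this, mul_assoc, ha, hb, mul_assoc]
      neg_mem' := by
        intro a ha p
        have h1 : (mono a 1 * mono (-a) 1 : Laur F (N + 1)) = 1 := by
          rw [mono_mul_mono, mul_one, add_neg_cancel, mono_zero_one]
        have h2 := ha (mono (-a) 1 * p)
        rw [← mul_assoc, h1, one_mul] at h2
        rw [h2, ← mul_assoc, mul_comm (mono (-a) 1) (mono a 1), h1, one_mul] }
  have h1 : ∀ i : Fin (N + 1), Finsupp.single i 1 - Finsupp.single 0 1 ∈ S := by
    intro i p
    have h2 := LinearMap.congr_fun (hr i 0 (by omega) (by omega)) p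
    simp only [Module.End.mul_apply] at h2
    rw [XinvOp_apply 0 (by omega), XinvOp_apply 0 (by omega), XOp_apply i (by omega), XOp_apply i (by omega),
      ← mul_assoc, ← mul_assoc] at h2
    have h3 : (Xel i * XinvEl 0 : Laur F (N + 1)) = mono (Finsupp.single i 1 - Finsupp.single 0 1) 1 := by
      rw [Xel, XinvEl, mono_mul_mono, mul_one, Finsupp.single_neg, sub_eq_add_neg]
    rw [← h3]
    exact h2
  have h2 : u = ∑ i, u i • (Finsupp.single i 1 - Finsupp.single 0 1) := by
    have e1 : ∑ i, u i • (Finsupp.single i 1 - Finsupp.single 0 1 : Fin (N + 1) →₀ ℤ)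
        = ∑ i, Finsupp.single i (u i) - Finsupp.single 0 (tdeg u) := by
      have e2 : (Finsupp.single 0 (tdeg u) : Fin (N + 1) →₀ ℤ) = ∑ i, Finsupp.single 0 (u i) := by
        rw [tdeg]
        exact map_sum (Finsupp.singleAddHom (0 : Fin (N + 1))) _ _
      rw [e2, ← Finset.sum_sub_distrib]
      refine Finset.sum_congr rfl (fun i _ => ?_)
      rw [smul_sub, Finsupp.smul_single, Finsupp.smul_single, smul_eq_mul, mul_one]
    rw [e1, hu, Finsupp.single_zero, sub_zero]
    exact (Finsupp.univ_sum_single u).symm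
  have h3 : u ∈ S := by
    rw [h2]
    exact sum_mem (fun i _ => zsmul_mem (h1 i) _)
  exact h3 p

/-- the multiplier in degree `d` -/
def psi (f : Module.End F (Laur F (N + 1))) (d : ℤ) : Laur F (N + 1) :=
  mono (Finsupp.single 0 (-d)) 1 * f (mono (Finsupp.single 0 d) 1)

lemma f_mono {f : Module.End F (Laur F (N + 1))}
    (hr : ∀ u : Fin (N + 1) →₀ ℤ, tdeg u = 0 → ∀ p, f (mono u 1 * p) = mono u 1 * f p)
    (v : Fin (N + 1) →₀ ℤ) (r : F) : f (mono v r) = mono v r * psi f (tdeg v) := by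
  have h1 : (mono v r : Laur F (N + 1)) = r • (mono (v - Finsupp.single 0 (tdeg v)) 1 * mono (Finsupp.single 0 (tdeg v)) 1) := by
    rw [mono_mul_mono, smul_mono, sub_add_cancel, mul_one, mul_one]
  have h2 : tdeg (v - Finsupp.single 0 (tdeg v)) = 0 := by
    have := tdeg_add (v - Finsupp.single 0 (tdeg v)) (Finsupp.single 0 (tdeg v))
    rw [sub_add_cancel, tdeg_single] at this
    omega
  have h3 : (mono v r * mono (Finsupp.single 0 (-tdeg v)) 1 : Laur F (N + 1)) =
      r • mono (v - Finsupp.single 0 (tdeg v)) 1 := by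
    rw [mono_mul_mono, smul_mono, Finsupp.single_neg, sub_eq_add_neg]
  rw [psi, ← mul_assoc, h3]
  rw [h1, map_smul, hr _ h2, smul_mul_assoc]

lemma f_hom (R : Conc q τ W T U P Y Yi D) {f : Module.End F (Laur F (N + 1))}
    (hr : ∀ u : Fin (N + 1) →₀ ℤ, tdeg u = 0 → ∀ p, f (mono u 1 * p) = mono u 1 * f p)
    (h : Laur F (N + 1)) (d : ℤ) (hd : (P ^ (N + 1)) h = q ^ d • h) : f h = h * psi f d := by
  have h1 : ∀ v, h.coeff v ≠ 0 → tdeg v = d := by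
    intro v hv
    have h2 := IsG_coeff (q := q) (σ := P ^ (N + 1)) (w := 1) (l := fun _ => 1) (fun v r => by
      rw [R.ypow_mono]
      have : Finsupp.equivMapDomain 1 v = v := by ext i; rfl
      rw [this]
      congr 2
      exact Finset.sum_congr rfl (fun i _ => (one_mul _).symm)) h v
    have h3 : Finsupp.equivMapDomain 1 v = v := by ext i; rfl
    rw [h3, hd, AddMonoidAlgebra.coeff_smul, Finsupp.smul_apply, smul_eq_mul] at h2
    have h4 := zpow_inj_of R.q0 R.hq (mul_right_cancel₀ hv h2)
    rw [h4, tdeg]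
    exact Finset.sum_congr rfl (fun i _ => (one_mul _).symm)
  have h5 : h = ∑ v ∈ h.coeff.support, mono v (h.coeff v) := by
    exact (AddMonoidAlgebra.sum_coeff_single h).symm
  conv_lhs => rw [h5]
  conv_rhs => rw [h5]
  rw [map_sum, Finset.sum_mul]
  refine Finset.sum_congr rfl (fun v hv => ?_)
  rw [f_mono hr, h1 v (Finsupp.mem_support_iff.1 hv)]

lemma psi_P (R : Conc q τ W T U P Y Yi D) {f : Module.End F (Laur F (N + 1))}
    (hr : ∀ u : Fin (N + 1) →₀ ℤ, tdeg u = 0 → ∀ p, f (mono u 1 * p) = mono u 1 * f p)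
    (hP : f * P = P * f) (d : ℤ) : P (psi f d) = psi f d := by
  have h1 := LinearMap.congr_fun hP (mono (Finsupp.single 0 d) 1)
  rw [Module.End.mul_apply, Module.End.mul_apply, f_mono hr, tdeg_single, IsG.map_mul R.q0 R.P_isG,
    f_hom R hr _ d] at h1
  · refine (mul_left_cancel₀ ?_ h1).symm
    intro h0
    exact mono_ne_zero (F := F) (Finsupp.single (0 : Fin (N + 1)) d) one_ne_zero
      (IsG.injective R.q0 R.P_isG (h0.trans (map_zero P).symm))
  · rw [← Module.End.mul_apply, ← pow_succ, pow_succ', Module.End.mul_apply, R.ypow_mono, tdeg_single, map_smul]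

lemma psi_T (R : Conc q τ W T U P Y Yi D) {f : Module.End F (Laur F (N + 1))}
    (hr : ∀ u : Fin (N + 1) →₀ ℤ, tdeg u = 0 → ∀ p, f (mono u 1 * p) = mono u 1 * f p)
    (k : ℕ) (hk : k < N) (hT : f * T k = T k * f) (d : ℤ) :
    W (Equiv.swap ⟨k, by omega⟩ ⟨k + 1, by omega⟩) (psi f d) = psi f d := by
  set p : Laur F (N + 1) := mono (Finsupp.single 0 d) 1 with hp
  have hp0 : p ≠ 0 := mono_ne_zero (F := F) (Finsupp.single (0 : Fin (N + 1)) d) one_ne_zero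
  have h1 := LinearMap.congr_fun hT p
  rw [Module.End.mul_apply, Module.End.mul_apply, hp, f_mono hr, tdeg_single, ← hp,
    f_hom R hr _ d] at h1
  · have h2 := R.hT k hk p
    have h3 := R.hT k hk (p * psi f d)
    rw [← h1, IsG.map_mul R.q0 (R.W_isG _), ← mul_assoc, h2] at h3
    set s := W (Equiv.swap (⟨k, by omega⟩ : Fin (N + 1)) ⟨k + 1, by omega⟩)
    have hA : (τ⁻¹ • Xel ⟨k + 1, by omega⟩ - τ • Xel ⟨k, by omega⟩ : Laur F (N + 1)) ≠ 0 :=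
      lin_X_ne_zero (by simp) _ _ (inv_ne_zero R.τ0)
    have hs : s p ≠ 0 := by
      intro h0
      exact hp0 (IsG.injective R.q0 (R.W_isG _) (h0.trans (map_zero _).symm))
    refine (mul_left_cancel₀ (mul_ne_zero hA hs) ?_).symm
    rw [add_mul, smul_mul_assoc, mul_assoc (Xel _) p, add_left_inj] at h3
    rw [h3, mul_assoc]
  · have h4 := LinearMap.congr_fun (R.PnT k hk) p
    simp only [Module.End.mul_apply] at h4
    rw [← h4, hp, R.ypow_mono, tdeg_single, map_smul]

lemma psi_W (R : Conc q τ W T U P Y Yi D) {x : Laur F (N + 1)}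
    (h : ∀ (k : ℕ) (hk : k < N), W (Equiv.swap ⟨k, by omega⟩ ⟨k + 1, by omega⟩) x = x)
    (w : Equiv.Perm (Fin (N + 1))) : W w x = x := by
  let S : Submonoid (Equiv.Perm (Fin (N + 1))) :=
    { carrier := {w | W w x = x}
      one_mem' := by
        change W 1 x = x
        rw [R.Wone]; rfl
      mul_mem' := by
        intro a b ha hb
        change W (a * b) x = x
        change W a x = x at ha
        change W b x = x at hb
        rw [← R.Wmul, Module.End.mul_apply, hb, ha] }
  have h1 : (⊤ : Submonoid _) ≤ S := by
    rw [← Equiv.Perm.mclosure_swap_castSucc_succ N, Submonoid.closure_le]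
    rintro _ ⟨i, rfl⟩
    exact h i i.2
  exact h1 (Submonoid.mem_top w)

lemma psi_const (R : Conc q τ W T U P Y Yi D) {x : Laur F (N + 1)}
    (hw : ∀ w, W w x = x) (hP : P x = x) : x = mono 0 (x.coeff 0) := by
  have hc : ∀ w v, x.coeff (Finsupp.equivMapDomain w v) = x.coeff v := by
    intro w v
    have h1 := IsG_coeff (q := q) (σ := W w) (w := w) (l := 0) (fun v r => by simp [R.hW]) x v
    rw [hw] at h1
    simpa using h1
  have h0 : ∀ v, x.coeff v ≠ 0 → v 0 = 0 := by
    intro v hv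
    have h1 := IsG_coeff (q := q) (σ := P) (w := (finRotate (N + 1)).symm) (l := Pi.single 0 1) (fun v r => by
      rw [R.hP]
      congr 2
      simp [Pi.single_apply]) x v
    rw [hP, hc] at h1
    have h2 : ∑ i, (Pi.single 0 1 : Fin (N + 1) → ℤ) i * v i = v 0 := by simp [Pi.single_apply]
    rw [h2] at h1
    apply zpow_inj_of R.q0 R.hq
    rw [zpow_zero]
    exact mul_right_cancel₀ hv (by rw [one_mul]; exact h1.symm)
  have h1 : ∀ v, x.coeff v ≠ 0 → v = 0 := by
    intro v hv
    ext i
    have h2 := h0 (Finsupp.equivMapDomain (Equiv.swap 0 i) v) (by rw [hc]; exact hv)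
    simpa using h2
  apply AddMonoidAlgebra.ext
  ext v
  rw [mono, AddMonoidAlgebra.coeff_single, Finsupp.single_apply]
  split_ifs with hv
  · rw [hv]
  · by_contra h3
    exact hv (h1 v h3).symm

end Conc
end PartTwoB

section PartTwoC
variable {F : Type*} [Field F] {N : ℕ}

/-- The multiplicative maps of group type. -/
def GHom (q : F) : Set (Laur F (N + 1) →* Laur F (N + 1)) :=
  {χ | ∃ σ : Module.End F (Laur F (N + 1)), IsG q σ ∧ ∀ p, χ p = σ p}

/-- The span of group type operators, with Laurent polynomial coefficients. -/
def FG (q : F) : Submodule (Laur F (N + 1)) (Laur F (N + 1) → Laur F (N + 1)) :=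
  Submodule.span (Laur F (N + 1)) ((fun χ : Laur F (N + 1) →* Laur F (N + 1) => (χ : Laur F (N + 1) → Laur F (N + 1))) '' GHom q)

lemma FG_mem {q : F} (q0 : q ≠ 0) {σ : Module.End F (Laur F (N + 1))} (h : IsG q σ) :
    (fun p => σ p) ∈ FG (N := N) q := by
  apply Submodule.subset_span
  exact ⟨{ toFun := fun p => σ p, map_one' := IsG.map_one h, map_mul' := IsG.map_mul q0 h },
    ⟨σ, h, fun _ => rfl⟩, rfl⟩

lemma FG_comp {q : F} (q0 : q ≠ 0) {σ : Module.End F (Laur F (N + 1))} (h : IsG q σ)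
    {g : Laur F (N + 1) → Laur F (N + 1)} (hg : g ∈ FG q) : (fun p => σ (g p)) ∈ FG q := by
  refine Submodule.span_induction (p := fun g _ => (fun p => σ (g p)) ∈ FG q) ?_ ?_ ?_ ?_ hg
  · rintro _ ⟨χ, ⟨ρ, hρ, e⟩, rfl⟩
    have h1 := FG_mem q0 (IsG.mul q0 h hρ)
    have h2 : (fun p => (σ * ρ) p) = (fun p => σ (χ p)) := by
      funext p
      rw [e p]; rfl
    rw [h2] at h1
    exact h1
  · have : (fun p => σ ((0 : Laur F (N + 1) → Laur F (N + 1)) p)) = 0 := by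
      funext p; exact map_zero σ
    rw [this]; exact zero_mem _
  · intro x y _ _ hx hy
    have : (fun p => σ ((x + y) p)) = (fun p => σ (x p)) + (fun p => σ (y p)) := by
      funext p; exact map_add σ _ _
    rw [this]; exact add_mem hx hy
  · intro a x _ hx
    have : (fun p => σ ((a • x) p)) = σ a • (fun p => σ (x p)) := by
      funext p; exact IsG.map_mul q0 h _ _
    rw [this]; exact Submodule.smul_mem _ _ hx

/-- Operators which become combinations of group type operators after clearing denominators. -/
def Nsub (q : F) : Submodule F (Module.End F (Laur F (N + 1))) where
  carrier := {f | ∃ δ : Laur F (N + 1), δ ≠ 0 ∧ (fun p => δ * f p) ∈ FG q}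
  zero_mem' := ⟨1, one_ne_zero, by
    have : (fun p => (1 : Laur F (N + 1)) * (0 : Module.End F (Laur F (N + 1))) p) = 0 := by
      funext p; simp
    rw [this]; exact zero_mem _⟩
  add_mem' := by
    rintro a b ⟨δ, h0, h⟩ ⟨δ', h0', h'⟩
    refine ⟨δ * δ', mul_ne_zero h0 h0', ?_⟩
    have : (fun p => δ * δ' * (a + b) p) = δ' • (fun p => δ * a p) + δ • (fun p => δ' * b p) := by
      funext p
      simp only [LinearMap.add_apply, Pi.add_apply, Pi.smul_apply, smul_eq_mul]
      ring
    rw [this]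
    exact add_mem (Submodule.smul_mem _ _ h) (Submodule.smul_mem _ _ h')
  smul_mem' := by
    rintro c a ⟨δ, h0, h⟩
    refine ⟨δ, h0, ?_⟩
    have : (fun p => δ * (c • a) p) = (mono 0 c : Laur F (N + 1)) • (fun p => δ * a p) := by
      funext p
      simp only [LinearMap.smul_apply, Pi.smul_apply, smul_eq_mul]
      have : (mono 0 c : Laur F (N + 1)) = c • 1 := by
        rw [← mono_zero_one, smul_mono, mul_one]
      rw [this, smul_mul_assoc, one_mul, mul_smul_comm]
    rw [this]
    exact Submodule.smul_mem _ _ h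

lemma Nsub_G {q : F} (q0 : q ≠ 0) {σ f : Module.End F (Laur F (N + 1))} (h : IsG q σ)
    (hf : f ∈ Nsub q) : σ * f ∈ Nsub q := by
  obtain ⟨δ, h0, hm⟩ := hf
  refine ⟨σ δ, fun h1 => h0 (IsG.injective q0 h (h1.trans (map_zero σ).symm)), ?_⟩
  have h1 := FG_comp q0 h hm
  have h2 : (fun p => σ (δ * f p)) = (fun p => σ δ * (σ * f) p) := by
    funext p; exact IsG.map_mul q0 h _ _
  rw [h2] at h1
  exact h1

lemma Nsub_mul {q : F} (u : Laur F (N + 1)) {f : Module.End F (Laur F (N + 1))}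
    (hf : f ∈ Nsub q) : mulOp u * f ∈ Nsub q := by
  obtain ⟨δ, h0, hm⟩ := hf
  refine ⟨δ, h0, ?_⟩
  have h2 : (fun p => δ * (mulOp u * f) p) = u • (fun p => δ * f p) := by
    funext p
    change δ * (u * f p) = u * (δ * f p)
    ring
  rw [h2]
  exact Submodule.smul_mem _ _ hm

lemma Nsub_T {q τ : F} (q0 : q ≠ 0) {i j : Fin (N + 1)} (hij : i ≠ j) {s t f : Module.End F (Laur F (N + 1))}
    (ht : IsT τ i j s t) (hs : IsG q s) (hf : f ∈ Nsub q) : t * f ∈ Nsub q := by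
  obtain ⟨δ, h0, hm⟩ := hf
  refine ⟨(δ * s δ) * (Xel j - Xel i), mul_ne_zero (mul_ne_zero h0
    (fun h1 => h0 (IsG.injective q0 hs (h1.trans (map_zero s).symm)))) (X_sub_ne_zero hij), ?_⟩
  have h1 := FG_comp q0 hs hm
  have h2 : (fun p => (δ * s δ) * (Xel j - Xel i) * (t * f) p) =
      (δ * (τ⁻¹ • Xel j - τ • Xel i)) • (fun p => s (δ * f p)) +
      (s δ * ((τ - τ⁻¹) • Xel j)) • (fun p => δ * f p) := by
    funext p
    have h3 := ht (f p)
    simp only [Pi.add_apply, Pi.smul_apply, smul_eq_mul]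
    rw [IsG.map_mul q0 hs, mul_assoc, Module.End.mul_apply, h3, ← smul_mul_assoc]
    ring
  rw [h2]
  exact add_mem (Submodule.smul_mem _ _ h1) (Submodule.smul_mem _ _ hm)

namespace Conc
variable {q τ : F} {W : Equiv.Perm (Fin (N + 1)) → Module.End F (Laur F (N + 1))}
    {T U : ℕ → Module.End F (Laur F (N + 1))} {P : Module.End F (Laur F (N + 1))}
    {Y Yi D : ℕ → Module.End F (Laur F (N + 1))}

lemma D_le_Nsub (R : Conc q τ W T U P Y Yi D) {f : Module.End F (Laur F (N + 1))}
    (hf : f ∈ Algebra.adjoin F (DSet T P (aF U 0 N * Yi N))) : f ∈ Nsub q := by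
  refine gen_left _ _ ?_ ?_ hf
  · refine ⟨1, one_ne_zero, ?_⟩
    have h1 := FG_mem R.q0 (IsG.one (F := F) (n := N + 1) (q := q))
    have h2 : (fun p => (1 : Module.End F (Laur F (N + 1))) p) =
      (fun p => (1 : Laur F (N + 1)) * (1 : Module.End F (Laur F (N + 1))) p) := by
      funext p; rw [one_mul]
    rw [h2] at h1
    exact h1
  · rintro s ((⟨k, hk, rfl⟩ | rfl | rfl) | ⟨i, hi, rfl | rfl⟩) y hy
    · exact Nsub_T R.q0 (by simp) (R.hT k hk) (R.W_isG _) hy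
    · exact Nsub_G R.q0 R.P_isG hy
    · refine Nsub_G R.q0 ?_ hy
      obtain ⟨g, hg, h1, h2⟩ := IsG.exists_inv R.q0 R.P_isG
      have : aF U 0 N * Yi N = g := by
        calc _ = g * P * (aF U 0 N * Yi N) := by rw [h2, one_mul]
          _ = g := by rw [mul_assoc, R.PPi, mul_one]
      rw [this]; exact hg
    · rw [XOp, dif_pos (by omega)]; exact Nsub_mul _ hy
    · rw [XinvOp, dif_pos (by omega)]; exact Nsub_mul _ hy

lemma phi_form (R : Conc q τ W T U P Y Yi D) {f : Module.End F (Laur F (N + 1))}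
    (hf : f ∈ Algebra.adjoin F (DSet T P (aF U 0 N * Yi N)))
    (hr : ∀ u : Fin (N + 1) →₀ ℤ, tdeg u = 0 → ∀ p, f (mono u 1 * p) = mono u 1 * f p)
    (φ : ℤ → F) (hφ : ∀ v r, f (mono v r) = φ (tdeg v) • mono v r) :
    ∃ (s : Finset (Laur F (N + 1) →* Laur F (N + 1))) (m : _ → ℤ) (c : _ → F), ∀ d, φ d = ∑ x ∈ s, c x * q ^ (m x * d) := by
  obtain ⟨δ, h0, hm⟩ := R.D_le_Nsub hf
  obtain ⟨l, hl, hsum⟩ := (Finsupp.mem_span_image_iff_linearCombination _).1 hm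
  have hS : ∀ p, ∑ χ ∈ l.support, l χ * χ p = δ * f p := by
    intro p
    have := congrFun hsum p
    rw [← this, Finsupp.linearCombination_apply, Finsupp.sum, Finset.sum_apply]
    rfl
  have hLI := linearIndependent_iff'.1 (linearIndependent_monoidHom (Laur F (N + 1)) (Laur F (N + 1)))
  have hfix : ∀ u : Fin (N + 1) →₀ ℤ, tdeg u = 0 → ∀ χ ∈ l.support, χ (mono u 1) = mono u 1 := by
    intro u hu χ hχ
    have h1 := hLI l.support (fun χ => l χ * (χ (mono u 1) - mono u 1)) (by
      funext p
      rw [Finset.sum_apply]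
      have h2 : ∀ χ : Laur F (N + 1) →* Laur F (N + 1),
          ((l χ * (χ (mono u 1) - mono u 1)) • (χ : Laur F (N + 1) → Laur F (N + 1))) p
          = l χ * χ (mono u 1 * p) - mono u 1 * (l χ * χ p) := by
        intro χ
        change (l χ * (χ (mono u 1) - mono u 1)) * χ p = _
        rw [map_mul]; ring
      rw [Finset.sum_congr rfl (fun χ _ => h2 χ), Finset.sum_sub_distrib, ← Finset.mul_sum, hS, hS,
        hr u hu]
      change δ * (mono u 1 * f p) - mono u 1 * (δ * f p) = 0
      ring) χ hχ
    have h3 := (mul_eq_zero.1 h1).resolve_left (Finsupp.mem_support_iff.1 hχ)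
    exact sub_eq_zero.1 h3
  have hex : ∀ χ ∈ l.support, ∃ m : ℤ, ∀ d : ℤ, χ (mono (Finsupp.single 0 d) 1) =
      q ^ (m * d) • mono (Finsupp.single 0 d) 1 := by
    intro χ hχ
    obtain ⟨σ, ⟨w, k, hσ⟩, e⟩ := hl hχ
    have hw : w 0 = 0 := by
      rcases Nat.eq_zero_or_pos N with hN | hN
      · subst hN; exact Fin.ext (by omega)
      · let j : Fin (N + 1) := ⟨1, by omega⟩
        have hj : (0 : Fin (N + 1)) ≠ j := by
          intro h; have := congrArg Fin.val h; simp [j] at this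
        have h1 := hfix (Finsupp.single 0 1 - Finsupp.single j 1) (by
          have := tdeg_add (Finsupp.single 0 1 - Finsupp.single j 1) (Finsupp.single j 1)
          rw [sub_add_cancel, tdeg_single, tdeg_single] at this
          omega) χ hχ
        rw [e, hσ, smul_mono, mul_one] at h1
        have h2 := (mono_inj (zpow_ne_zero _ R.q0) h1).1
        have h3 := DFunLike.congr_fun h2 0
        have h4 : (Finsupp.single 0 1 - Finsupp.single j 1 : Fin (N + 1) →₀ ℤ) 0 = 1 := by
          simp [Finsupp.single_apply, hj.symm]
        rw [h4, Finsupp.equivMapDomain_apply, Finsupp.sub_apply, Finsupp.single_apply, Finsupp.single_apply] at h3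
        by_contra h5
        have h6 : ¬ (0 = w.symm 0) := by
          intro h7
          apply h5
          exact (Equiv.eq_symm_apply w).1 h7
        rw [if_neg h6] at h3
        split_ifs at h3 <;> omega
    refine ⟨k 0, fun d => ?_⟩
    rw [e, hσ, Finsupp.equivMapDomain_single, hw]
    congr 2
    simp [Finsupp.single_apply]
  choose! m hmd using hex
  obtain ⟨v0, hv0⟩ : ∃ v, δ.coeff v ≠ 0 := by
    by_contra hcon
    push Not at hcon
    apply h0
    apply AddMonoidAlgebra.ext
    ext v
    exact hcon v
  refine ⟨l.support, m, fun χ => (l χ).coeff v0 / δ.coeff v0, fun d => ?_⟩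
  have h1 := hS (mono (Finsupp.single 0 d) 1)
  rw [hφ, tdeg_single] at h1
  have h2 : ∑ χ ∈ l.support, l χ * χ (mono (Finsupp.single 0 d) 1) =
      (∑ χ ∈ l.support, q ^ (m χ * d) • l χ) * mono (Finsupp.single 0 d) 1 := by
    rw [Finset.sum_mul]
    refine Finset.sum_congr rfl (fun χ hχ => ?_)
    rw [hmd χ hχ, mul_smul_comm, smul_mul_assoc]
  rw [h2, mul_smul_comm, ← smul_mul_assoc] at h1
  have h3 := mul_right_cancel₀ (mono_ne_zero (F := F) (Finsupp.single (0 : Fin (N + 1)) d) one_ne_zero) h1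
  have h4 := congrArg (fun p : Laur F (N + 1) => p.coeff v0) h3
  simp only [AddMonoidAlgebra.coeff_smul, Finsupp.smul_apply, smul_eq_mul, AddMonoidAlgebra.coeff_sum,
    Finsupp.finset_sum_apply] at h4
  rw [eq_comm, eq_comm, ← mul_left_inj' hv0, ← h4, Finset.sum_mul]
  refine Finset.sum_congr rfl (fun χ _ => ?_)
  field_simp

lemma part_two (R : Conc q τ W T U P Y Yi D) (y yi : Module.End F (Laur F (N + 1)))
    (hy : y = ((List.range (N + 1)).map Y).prod) (hyi : yi = (((List.range (N + 1)).map Yi).reverse).prod)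
    (f : Module.End F (Laur F (N + 1))) :
    (f ∈ Algebra.adjoin F (AfrSet T (fun i => XOp i) D Y Yi) ∧
      ∀ g ∈ Algebra.adjoin F (HglSet T Y Yi (fun i j => XOp i * D j)), f * g = g * f) ↔
      f ∈ Submodule.span F (Set.range fun m : ℤ => zpowOp y yi m) := by
  have hinv := R.Yti_inv (N + 1) le_rfl
  rw [← hy, ← hyi] at hinv
  have hyP : y = P ^ (N + 1) := by rw [hy, R.Yt_eq]
  constructor
  · rintro ⟨hf, hc⟩
    rw [R.Hgl_eq] at hc
    have hfD := R.A_le_D hf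
    have hr := comm_mono (fun i k hi hk => R.comm_ratio hfD (fun i hi =>
      hc _ (DRel.XD_memE i N hi le_rfl)) i k hi hk)
    have hψ : ∀ d, psi f d = mono 0 ((psi f d).coeff 0) := by
      intro d
      apply R.psi_const
      · exact R.psi_W (fun k hk => R.psi_T hr k hk (hc _ (DRel.H_le (DRel.T_mem k hk))) d)
      · exact R.psi_P hr (hc _ (DRel.H_le DRel.P_mem)) d
    have hφ : ∀ v r, f (mono v r) = (psi f (tdeg v)).coeff 0 • mono v r := by
      intro v r
      rw [f_mono hr]
      nth_rewrite 1 [hψ]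
      rw [mono_mul_mono, smul_mono, add_zero, mul_comm]
    obtain ⟨s, m, c, hm⟩ := R.phi_form hfD hr (fun d => (psi f d).coeff 0) hφ
    have hfe : f = ∑ x ∈ s, c x • zpowOp y yi (m x) := by
      apply mono_ext
      intro v r
      rw [hφ, hm, LinearMap.sum_apply, Finset.sum_smul]
      refine Finset.sum_congr rfl (fun x _ => ?_)
      rw [LinearMap.smul_apply, R.zpow_mono hyP hinv.2, smul_smul]
    rw [hfe]
    exact Submodule.sum_mem _ (fun x _ => Submodule.smul_mem _ _ (Submodule.subset_span ⟨m x, rfl⟩))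
  · intro hf
    let C : Subalgebra F (Module.End F (Laur F (N + 1))) :=
      Algebra.adjoin F (AfrSet T (fun i => XOp i) D Y Yi) ⊓
      Subalgebra.centralizer F (Algebra.adjoin F (HglSet T Y Yi (fun i j => XOp i * D j)))
    have hyc : ∀ g ∈ Algebra.adjoin F (HglSet T Y Yi (fun i j => XOp i * D j)), g * y = y * g := by
      intro g hg
      rw [hyP]; exact ((R.part_one g).2 hg).2
    have hyA : y ∈ Algebra.adjoin F (AfrSet T (fun i => XOp i) D Y Yi) := by
      rw [hy]
      apply Subalgebra.list_prod_mem
      intro x hx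
      obtain ⟨i, hi, rfl⟩ := List.mem_map.1 hx
      exact Algebra.subset_adjoin (Or.inr ⟨i, List.mem_range.1 hi, Or.inr (Or.inr (Or.inl rfl))⟩)
    have hyiA : yi ∈ Algebra.adjoin F (AfrSet T (fun i => XOp i) D Y Yi) := by
      rw [hyi]
      apply Subalgebra.list_prod_mem
      intro x hx
      obtain ⟨i, hi, rfl⟩ := List.mem_map.1 (List.mem_reverse.1 hx)
      exact Algebra.subset_adjoin (Or.inr ⟨i, List.mem_range.1 hi, Or.inr (Or.inr (Or.inr rfl))⟩)
    have h1 : y ∈ C := ⟨hyA, fun g hg => hyc g hg⟩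
    have h2 : yi ∈ C := by
      refine ⟨hyiA, fun g hg => ?_⟩
      calc g * yi = yi * (y * g) * yi := by rw [← mul_assoc, hinv.2, one_mul]
        _ = yi * g * (y * yi) := by rw [← hyc g hg]; simp only [mul_assoc]
        _ = yi * g := by rw [hinv.1, mul_one]
    have h3 : Submodule.span F (Set.range fun m : ℤ => zpowOp y yi m) ≤ Subalgebra.toSubmodule C := by
      rw [Submodule.span_le]
      rintro _ ⟨m, rfl⟩
      change zpowOp y yi m ∈ C
      rw [zpowOp]
      split_ifs
      · exact pow_mem h1 _
      · exact pow_mem h2 _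
    have h4 : f ∈ C := h3 hf
    exact ⟨h4.1, fun g hg => (h4.2 g hg).symm⟩

end Conc
end PartTwoC

/-- Over `F = ℂ(τ)` (realised as `RatFunc ℂ`), the double centraliser
property: the centraliser of `Ỹ = Y_1 ⋯ Y_n` in `𝔄` is `ℍ^{gl_n}`, and the centraliser of
`ℍ^{gl_n}` in `𝔄` is the `F`-linear span of the powers `Ỹ^m`, `m ∈ ℤ`. -/
theorem statement16
    (n : ℕ) [NeZero n]
    (q₀ : ℂ) (hq₀ : q₀ ≠ 0) (hq₀root : ∀ m : ℕ, m ≠ 0 → q₀ ^ m ≠ 1)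
    -- the action of the symmetric group permuting the variables
    (W : Equiv.Perm (Fin n) → Module.End (RatFunc ℂ) (Laur (RatFunc ℂ) n))
    (hW : ∀ (w : Equiv.Perm (Fin n)) (v : Fin n →₀ ℤ) (r : (RatFunc ℂ)),
      W w (mono v r) = mono (Finsupp.equivMapDomain w v) r)
    -- the Demazure–Lusztig operators `T_k` and their inverses `Ti k = T k + τ⁻¹ - τ`
    (T Ti : ℕ → Module.End (RatFunc ℂ) (Laur (RatFunc ℂ) n))
    (hT : ∀ (k : ℕ) (hk : k + 1 < n) (p : Laur (RatFunc ℂ) n),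
      (Xel ⟨k + 1, hk⟩ - Xel ⟨k, Nat.lt_of_succ_lt hk⟩) * T k p
        = ((RatFunc.X : RatFunc ℂ)⁻¹ • Xel ⟨k + 1, hk⟩ - (RatFunc.X : RatFunc ℂ) • Xel ⟨k, Nat.lt_of_succ_lt hk⟩)
            * W (Equiv.swap ⟨k, Nat.lt_of_succ_lt hk⟩ ⟨k + 1, hk⟩) p
          + ((RatFunc.X : RatFunc ℂ) - (RatFunc.X : RatFunc ℂ)⁻¹) • (Xel ⟨k + 1, hk⟩ * p))
    (hTi : ∀ k, Ti k = T k + ((RatFunc.X : RatFunc ℂ)⁻¹ - (RatFunc.X : RatFunc ℂ)) • (1 : Module.End (RatFunc ℂ) (Laur (RatFunc ℂ) n)))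
    (hTinv : ∀ k, k + 1 < n → T k * Ti k = 1 ∧ Ti k * T k = 1)
    -- the operator `π⁻¹`
    (piInv : Module.End (RatFunc ℂ) (Laur (RatFunc ℂ) n))
    (hpiInv : ∀ (v : Fin n →₀ ℤ) (r : (RatFunc ℂ)),
      piInv (mono v r)
        = (algebraMap ℂ (RatFunc ℂ) q₀) ^ (v 0) • mono (Finsupp.equivMapDomain (finRotate n).symm v) r)
    -- the operators `Y_i = T_i ⋯ T_{n-1} ⬝ π⁻¹ ⬝ T_1⁻¹ ⋯ T_{i-1}⁻¹` and their inverses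
    (Y Yi : ℕ → Module.End (RatFunc ℂ) (Laur (RatFunc ℂ) n))
    (hY : ∀ i, Y i = aF T i (n - 1 - i) * piInv * aF Ti 0 i)
    (hYinv : ∀ i, i < n → Y i * Yi i = 1 ∧ Yi i * Y i = 1)
    -- the `q`-Dunkl-type operators `D_i`
    (D : ℕ → Module.End (RatFunc ℂ) (Laur (RatFunc ℂ) n))
    (hD : ∀ i, D i = aF T i (n - 1 - i)
        * (((algebraMap ℂ (RatFunc ℂ) q₀) - (algebraMap ℂ (RatFunc ℂ) q₀)⁻¹)⁻¹ • (XinvOp (n - 1) * (Y (n - 1) - Yi (n - 1))))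
        * dF T i (n - 1 - i))
    -- the operators `e_{ij} = X_i · D_j`
    (e : ℕ → ℕ → Module.End (RatFunc ℂ) (Laur (RatFunc ℂ) n))
    (he : ∀ i j, e i j = XOp i * D j)
    -- the element `Ỹ = Y_1 ⋯ Y_n` and its inverse
    (Yt Yti : Module.End (RatFunc ℂ) (Laur (RatFunc ℂ) n))
    (hYt : Yt = ((List.range n).map Y).prod)
    (hYti : Yti = (((List.range n).map Yi).reverse).prod)
    :
    (∀ f : Module.End (RatFunc ℂ) (Laur (RatFunc ℂ) n),
      (f ∈ Algebra.adjoin (RatFunc ℂ) (AfrSet T (fun i => XOp i) D Y Yi) ∧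
          f * Yt = Yt * f)
        ↔ f ∈ Algebra.adjoin (RatFunc ℂ) (HglSet T Y Yi e)) ∧
    (∀ f : Module.End (RatFunc ℂ) (Laur (RatFunc ℂ) n),
      (f ∈ Algebra.adjoin (RatFunc ℂ) (AfrSet T (fun i => XOp i) D Y Yi) ∧
          ∀ g ∈ Algebra.adjoin (RatFunc ℂ) (HglSet T Y Yi e), f * g = g * f)
        ↔ f ∈ Submodule.span (RatFunc ℂ) (Set.range fun m : ℤ => zpowOp Yt Yti m)) := by
  obtain ⟨N, rfl⟩ : ∃ N, n = N + 1 := Nat.exists_eq_succ_of_ne_zero (NeZero.ne n)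
  have hsub : N + 1 - 1 = N := Nat.add_sub_cancel N 1
  simp only [hsub] at hY hD
  have hinj : Function.Injective (algebraMap ℂ (RatFunc ℂ)) := (algebraMap ℂ (RatFunc ℂ)).injective
  have R : Conc (algebraMap ℂ (RatFunc ℂ) q₀) (RatFunc.X : RatFunc ℂ) W T Ti piInv Y Yi D :=
    { q0 := by
        intro h
        exact hq₀ (hinj (h.trans (map_zero _).symm))
      τ0 := RatFunc.X_ne_zero
      hq := by
        intro m hm h
        apply hq₀root m hm
        apply hinj
        rw [map_pow, h, map_one]
      hW := hW
      hT := fun k hk p => hT k (Nat.succ_lt_succ hk) p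
      hU := hTi
      hTU := fun k hk => hTinv k (Nat.succ_lt_succ hk)
      hP := hpiInv
      hY := hY
      hYinv := hYinv
      hD := hD }
  have he' : e = fun i j => XOp i * D j := by
    funext i j
    exact he i j
  subst he'
  constructor
  · intro f
    have hyP : Yt = piInv ^ (N + 1) := by rw [hYt, R.Yt_eq]
    rw [hyP]
    exact R.part_one f
  · intro f
    exact R.part_two Yt Yti hYt hYti f
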